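/- arXiv:2103.16186 — 6 statements merged into one kernel-verified Lean document; each statement's English description precedes it below -/
import Mathlib

section
/- Fix 1 ≤ p ≤ ∞ with p ≠ 2, and set c_p := 2/p − 1 (with c_∞ := −1). Then there exists ε₀ > 0 such that for every 0 < ε < ε₀ one has the strict inequality ‖c_p ε z̄ + 1 + ε z‖_p < ‖1 + ε z‖_p, where the norms are of the functions z ↦ c_p ε z̄ + 1 + ε z and z ↦ 1 + ε z on 𝕋. -/
open MeasureTheory
open scoped ENNReal

noncomputable section

/-!
For a unit vector `e`, expanding `‖e + w‖ ^ p = (1 + 2⟪e, w⟫ + ‖w‖²) ^ (p / 2)` to second order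
and integrating shows that, for a bounded perturbation `g` with `∫ ⟪e, g⟫ = 0`,
`∫ ‖e + ε g‖ ^ p = 1 + (p / 2) ε² ∫ (‖g‖² + (p - 2) ⟪e, g⟫²) + O(ε³)`.
For `e = 1` and `g = c z̄ + z` the second-order integral is `1 + c² + (p - 2) (1 + c)² / 2`. As a
function of `c` it is minimal exactly at `c = 2 / p - 1`, which is not `0` because `p ≠ 2`; so the
perturbation with this `c` beats the one with `c = 0`. For `p = ∞` the function
`1 + ε (z - z̄) = 1 + 2 i ε Im z` has modulus `1 + O(ε²)`, while `1 + ε z` attains `1 + ε`.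
-/

section

open Asymptotics Filter Topology AddCircle
open scoped RealInnerProductSpace

theorem ringChoose_two {K : Type*} [Field K] [CharZero K] (a : K) :
    Ring.choose a 2 = a * (a - 1) / 2 := by
  rw [Ring.choose_eq_smul, ← Polynomial.aeval_eq_smeval]
  simp [descPochhammer_succ_right, div_eq_inv_mul]

theorem isBigO_one_add_rpow_sub_taylor (q : ℝ) :
    (fun s : ℝ => (1 + s) ^ q - (1 + q * s + q * (q - 1) / 2 * s ^ 2)) =O[𝓝 0]
      fun s => s ^ 3 := by
  have h := (Real.one_add_rpow_hasFPowerSeriesAt_zero (a := q)).isBigO_sub_partialSum_pow 3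
  refine (h.congr_left fun s => ?_).trans (isBigO_of_le _ fun s => by simp)
  simp only [FormalMultilinearSeries.partialSum, Finset.sum_range_succ, binomialSeries_apply,
    ringChoose_two]
  simp [mul_comm, sq]

theorem eventually_pos_of_isLittleO_sub_mul_sq {f : ℝ → ℝ} {a : ℝ} (ha : 0 < a)
    (hf : (fun ε => f ε - a * ε ^ 2) =o[𝓝[≠] 0] fun ε => ε ^ 2) : ∀ᶠ ε in 𝓝[≠] 0, 0 < f ε := by
  filter_upwards [hf.def (half_pos ha), self_mem_nhdsWithin] with ε hε hne
  have hsq : 0 < ε ^ 2 := sq_pos_of_ne_zero hne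
  rw [Real.norm_eq_abs, Real.norm_of_nonneg hsq.le] at hε
  nlinarith [neg_le_of_abs_le hε]

section InnerProductSpace

variable {E : Type*} [NormedAddCommGroup E] [InnerProductSpace ℝ E] {e : E}

/-- At a unit vector `e`, the quadratic form `‖w‖² + (p - 2) ⟪e, w⟫²` is `2 / p` times the
second-order term of `w ↦ ‖e + w‖ ^ p`; the factor is left out so that the form makes sense for
every `p`. -/
def normRpowQuadForm (p : ℝ) (e w : E) : ℝ :=
  ‖w‖ ^ 2 + (p - 2) * ⟪e, w⟫ ^ 2

theorem normRpowQuadForm_smul (p ε : ℝ) (e w : E) :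
    normRpowQuadForm p e (ε • w) = ε ^ 2 * normRpowQuadForm p e w := by
  simp only [normRpowQuadForm, norm_smul, real_inner_smul_right, mul_pow, Real.norm_eq_abs, sq_abs]
  ring

theorem normRpowQuadForm_one (p : ℝ) (z : ℂ) :
    normRpowQuadForm p 1 z = (p - 1) * z.re ^ 2 + z.im ^ 2 := by
  simp only [normRpowQuadForm, Complex.inner, map_one, mul_one, Complex.sq_norm,
    Complex.normSq_apply]
  ring

theorem norm_add_rpow_of_norm_eq_one (he : ‖e‖ = 1) (p : ℝ) (w : E) :
    ‖e + w‖ ^ p = (1 + (2 * ⟪e, w⟫ + ‖w‖ ^ 2)) ^ (p / 2) := by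
  rw [← add_assoc, ← one_pow 2, ← he, ← norm_add_sq_real, ← Real.rpow_natCast_mul (norm_nonneg _)]
  congr 1
  push_cast
  ring

theorem isBigO_norm_add_rpow_sub_taylor (he : ‖e‖ = 1) (p : ℝ) :
    (fun w : E => ‖e + w‖ ^ p - (1 + p * ⟪e, w⟫ + p / 2 * normRpowQuadForm p e w)) =O[𝓝 0]
      fun w => ‖w‖ ^ 3 := by
  have hinner : (fun w : E => ⟪e, w⟫) =O[𝓝 0] fun w => ‖w‖ :=
    isBigO_of_le _ fun w => by simpa [he] using abs_real_inner_le_norm e w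
  have hsq : (fun w : E => ‖w‖ ^ 2) =O[𝓝 0] fun w => ‖w‖ := by
    simpa [sq] using
      (isBigO_refl (fun w : E => ‖w‖) (𝓝 0)).mul (tendsto_norm_zero.isBigO_one ℝ)
  have hs : (fun w : E => 2 * ⟪e, w⟫ + ‖w‖ ^ 2) =O[𝓝 0] fun w => ‖w‖ :=
    (hinner.const_mul_left 2).add hsq
  have hs_tendsto : Tendsto (fun w : E => 2 * ⟪e, w⟫ + ‖w‖ ^ 2) (𝓝 0) (𝓝 0) :=
    hs.trans_tendsto tendsto_norm_zero
  have htaylor :=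
    ((isBigO_one_add_rpow_sub_taylor (p / 2)).comp_tendsto hs_tendsto).trans (hs.pow 3)
  have hcross : (fun w : E => (4 * ⟪e, w⟫ + ‖w‖ ^ 2) * ‖w‖ ^ 2) =O[𝓝 0] fun w => ‖w‖ ^ 3 :=
    (((hinner.const_mul_left 4).add hsq).mul (isBigO_refl (fun w : E => ‖w‖ ^ 2) _)).congr_right
      fun w => by ring
  refine (htaylor.add (hcross.const_mul_left (p / 2 * (p / 2 - 1) / 2))).congr_left fun w => ?_
  simp only [Function.comp_apply, norm_add_rpow_of_norm_eq_one he, normRpowQuadForm]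
  ring

end InnerProductSpace

section Integral

variable {X E F : Type*} [MeasurableSpace X] {μ : Measure X}
  [NormedAddCommGroup E] [NormedAddCommGroup F]

theorem exists_eventually_ae_norm_comp_smul_le [NormedSpace ℝ E] {R : E → F} {n : ℕ} {g : X → E}
    (hR : R =O[𝓝 0] fun w => ‖w‖ ^ n) (hg : MemLp g ∞ μ) :
    ∃ C, ∀ᶠ ε : ℝ in 𝓝 0, ∀ᵐ x ∂μ, ‖R (ε • g x)‖ ≤ C * ‖ε ^ n‖ := by
  obtain ⟨C, hC, hR⟩ := hR.exists_nonneg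
  obtain ⟨r, hr, hball⟩ := Metric.eventually_nhds_iff.1 hR.bound
  set M := lpNorm g ∞ μ
  have hsmall : ∀ᶠ ε : ℝ in 𝓝 0, |ε| * M < r :=
    ((continuous_abs.mul continuous_const).tendsto' 0 0 (by simp)).eventually_lt_const hr
  refine ⟨C * M ^ n, hsmall.mono fun ε hε => ?_⟩
  filter_upwards [ae_le_lpNorm_exponent_top hg] with x hx
  have hle : ‖ε • g x‖ ≤ |ε| * M := by
    rw [norm_smul, Real.norm_eq_abs]
    gcongr
  calc ‖R (ε • g x)‖ ≤ C * ‖ε • g x‖ ^ n := by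
        simpa using hball (by simpa using hle.trans_lt hε)
    _ ≤ C * (|ε| * M) ^ n := by gcongr
    _ = C * M ^ n * ‖ε ^ n‖ := by
        rw [norm_pow, Real.norm_eq_abs]
        ring

theorem eLpNorm_lt_eLpNorm_of_integral_rpow_norm_lt {p : ℝ≥0∞} (hp₀ : p ≠ 0) (hp : p ≠ ∞)
    {f : X → E} {g : X → F} (hf : MemLp f p μ) (hg : MemLp g p μ)
    (hlt : ∫ x, ‖f x‖ ^ p.toReal ∂μ < ∫ x, ‖g x‖ ^ p.toReal ∂μ) :
    eLpNorm f p μ < eLpNorm g p μ := by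
  have hf_nonneg : 0 ≤ ∫ x, ‖f x‖ ^ p.toReal ∂μ := integral_nonneg fun x => by positivity
  rw [hf.eLpNorm_eq_integral_rpow_norm hp₀ hp, hg.eLpNorm_eq_integral_rpow_norm hp₀ hp]
  refine (ENNReal.ofReal_lt_ofReal_iff (Real.rpow_pos_of_pos (hf_nonneg.trans_lt hlt) _)).2 ?_
  exact Real.rpow_lt_rpow hf_nonneg hlt (inv_pos.2 (ENNReal.toReal_pos hp₀ hp))

variable [InnerProductSpace ℝ E] {e : E} {g h : X → E}

theorem integrable_normRpowQuadForm_comp (hg : MemLp g 2 μ) (p : ℝ) (e : E) :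
    Integrable (fun x => normRpowQuadForm p e (g x)) μ :=
  (hg.integrable_norm_pow two_ne_zero).add ((hg.const_inner e).integrable_sq.const_mul _)

variable [IsFiniteMeasure μ]

theorem isBigO_integral_norm_add_smul_rpow_sub_taylor (he : ‖e‖ = 1) (p : ℝ) (hg : MemLp g ∞ μ) :
    (fun ε : ℝ => ∫ x, ‖e + ε • g x‖ ^ p ∂μ - (μ.real Set.univ + p * (ε * ∫ x, ⟪e, g x⟫ ∂μ) +
      p / 2 * (ε ^ 2 * ∫ x, normRpowQuadForm p e (g x) ∂μ))) =O[𝓝 0] fun ε => ε ^ 3 := by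
  obtain ⟨C, hC⟩ :=
    exists_eventually_ae_norm_comp_smul_le (isBigO_norm_add_rpow_sub_taylor he p) hg
  refine IsBigO.of_bound (C * μ.real Set.univ) (hC.mono fun ε hε => ?_)
  have hinner : Integrable (fun x => ⟪e, g x⟫) μ := (hg.integrable le_top).const_inner e
  have hquad := integrable_normRpowQuadForm_comp (hg.mono_exponent le_top) p e
  have hlin : Integrable (fun x => 1 + p * (ε * ⟪e, g x⟫)) μ :=
    (integrable_const 1).add ((hinner.const_mul ε).const_mul p)
  have htaylor : Integrable
      (fun x => 1 + p * ⟪e, ε • g x⟫ + p / 2 * normRpowQuadForm p e (ε • g x)) μ := by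
    simp only [real_inner_smul_right, normRpowQuadForm_smul]
    exact hlin.add ((hquad.const_mul _).const_mul _)
  have hpow : Integrable (fun x => ‖e + ε • g x‖ ^ p) μ := by
    have hmeas : AEStronglyMeasurable (fun x => ‖e + ε • g x‖ ^ p) μ :=
      ((((hg.aestronglyMeasurable.const_smul ε).const_add e).norm.aemeasurable).pow_const
        p).aestronglyMeasurable
    simpa using! (Integrable.of_bound (hmeas.sub htaylor.aestronglyMeasurable) _ hε).add htaylor
  have hint : ∫ x, (1 + p * ⟪e, ε • g x⟫ + p / 2 * normRpowQuadForm p e (ε • g x)) ∂μ =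
      μ.real Set.univ + p * (ε * ∫ x, ⟪e, g x⟫ ∂μ) +
        p / 2 * (ε ^ 2 * ∫ x, normRpowQuadForm p e (g x) ∂μ) := by
    simp only [real_inner_smul_right, normRpowQuadForm_smul]
    rw [integral_add hlin ((hquad.const_mul _).const_mul _),
      integral_add (integrable_const 1) ((hinner.const_mul ε).const_mul p)]
    simp only [integral_const_mul, integral_const, smul_eq_mul, mul_one]
  rw [← hint, ← integral_sub hpow htaylor]
  exact (norm_integral_le_of_norm_le_const hε).trans_eq (by ring)

theorem eventually_eLpNorm_add_smul_lt {p : ℝ≥0∞} (hp₀ : p ≠ 0) (hp : p ≠ ∞) (he : ‖e‖ = 1)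
    (hg : MemLp g ∞ μ) (hh : MemLp h ∞ μ) (hmean : ∫ x, ⟪e, g x⟫ ∂μ = ∫ x, ⟪e, h x⟫ ∂μ)
    (hquad : ∫ x, normRpowQuadForm p.toReal e (g x) ∂μ <
      ∫ x, normRpowQuadForm p.toReal e (h x) ∂μ) :
    ∀ᶠ ε : ℝ in 𝓝[≠] 0,
      eLpNorm (fun x => e + ε • g x) p μ < eLpNorm (fun x => e + ε • h x) p μ := by
  have hmemLp {f : X → E} (hf : MemLp f ∞ μ) (ε : ℝ) : MemLp (fun x => e + ε • f x) p μ :=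
    ((memLp_const e).add (hf.const_smul ε)).mono_exponent le_top
  have hgap : 0 < p.toReal / 2 * (∫ x, normRpowQuadForm p.toReal e (h x) ∂μ -
      ∫ x, normRpowQuadForm p.toReal e (g x) ∂μ) :=
    mul_pos (half_pos (ENNReal.toReal_pos hp₀ hp)) (sub_pos.2 hquad)
  have hdiff := ((isBigO_integral_norm_add_smul_rpow_sub_taylor he p.toReal hh).sub
    (isBigO_integral_norm_add_smul_rpow_sub_taylor he p.toReal hg)).trans_isLittleO
      (isLittleO_pow_pow (show 2 < 3 by norm_num))
  filter_upwards [eventually_pos_of_isLittleO_sub_mul_sq hgap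
    (f := fun ε => ∫ x, ‖e + ε • h x‖ ^ p.toReal ∂μ - ∫ x, ‖e + ε • g x‖ ^ p.toReal ∂μ)
    ((hdiff.mono nhdsWithin_le_nhds).congr_left fun ε => by rw [hmean]; ring)] with ε hε
  exact eLpNorm_lt_eLpNorm_of_integral_rpow_norm_lt hp₀ hp (hmemLp hg ε) (hmemLp hh ε)
    (sub_pos.1 hε)

end Integral

theorem enorm_le_eLpNorm_top_of_continuous {X E : Type*} [TopologicalSpace X] [MeasurableSpace X]
    {μ : Measure X} [μ.IsOpenPosMeasure] [NormedAddCommGroup E] {f : X → E} (hf : Continuous f)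
    (x : X) : ‖f x‖ₑ ≤ eLpNorm f ∞ μ := by
  have hdense : Dense {y | ‖f y‖ₑ ≤ eLpNorm f ∞ μ} :=
    Measure.dense_of_ae (by simpa using! ae_le_eLpNormEssSup)
  exact (isClosed_le hf.enorm continuous_const).closure_subset (hdense x)

section Circle

variable {T : ℝ} {n : ℤ}

theorem norm_fourier_apply (n : ℤ) (x : AddCircle T) : ‖fourier n x‖ = 1 := by
  rw [fourier_apply, Circle.norm_coe]

theorem re_fourier_sq_add_im_fourier_sq (n : ℤ) (x : AddCircle T) :
    (fourier n x).re ^ 2 + (fourier n x).im ^ 2 = 1 := by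
  have hnorm := Complex.sq_norm (fourier n x)
  rw [norm_fourier_apply, Complex.normSq_apply] at hnorm
  linarith

theorem re_fourier_sq (n : ℤ) (x : AddCircle T) :
    (fourier n x).re ^ 2 = 1 / 2 + 1 / 2 * (fourier (n + n) x).re := by
  rw [fourier_add, Complex.mul_re]
  linarith [re_fourier_sq_add_im_fourier_sq n x]

/-- The perturbation `c z̄ + z` of the constant function `1`, with `z = fourier n`. -/
def conjPerturbation (n : ℤ) (c : ℝ) (x : AddCircle T) : ℂ :=
  c * fourier (-n) x + fourier n x

theorem continuous_conjPerturbation (n : ℤ) (c : ℝ) :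
    Continuous (conjPerturbation n c : AddCircle T → ℂ) := by
  unfold conjPerturbation
  fun_prop

theorem conjPerturbation_re (n : ℤ) (c : ℝ) (x : AddCircle T) :
    (conjPerturbation n c x).re = (1 + c) * (fourier n x).re := by
  simp only [conjPerturbation, fourier_neg, Complex.add_re, Complex.re_ofReal_mul, Complex.conj_re]
  ring

theorem conjPerturbation_im (n : ℤ) (c : ℝ) (x : AddCircle T) :
    (conjPerturbation n c x).im = (1 - c) * (fourier n x).im := by
  simp only [conjPerturbation, fourier_neg, Complex.add_im, Complex.im_ofReal_mul, Complex.conj_im]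
  ring

theorem norm_one_add_smul_conjPerturbation_neg_one_le (n : ℤ) (ε : ℝ) (x : AddCircle T) :
    ‖1 + ε • conjPerturbation n (-1) x‖ ≤ 1 + 2 * ε ^ 2 := by
  refine le_of_sq_le_sq ?_ (by positivity)
  simp only [Complex.sq_norm, Complex.normSq_apply, Complex.add_re, Complex.add_im, Complex.one_re,
    Complex.one_im, Complex.real_smul, Complex.re_ofReal_mul, Complex.im_ofReal_mul,
    conjPerturbation_re, conjPerturbation_im]
  have him : (fourier n x).im ^ 2 ≤ 1 := by
    linarith [re_fourier_sq_add_im_fourier_sq n x, sq_nonneg (fourier n x).re]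
  nlinarith [mul_le_mul_of_nonneg_left him (sq_nonneg ε), sq_nonneg (ε ^ 2)]

variable [Fact (0 < T)]

theorem integral_re_fourier (hn : n ≠ 0) :
    ∫ x : AddCircle T, (fourier n x).re ∂haarAddCircle = 0 :=
  integral_eq_zero_of_add_right_eq_neg fun x => by
    rw [fourier_add_half_inv_index hn Fact.out, Complex.neg_re]

theorem integrable_haarAddCircle_of_continuous {E : Type*} [NormedAddCommGroup E]
    {f : AddCircle T → E} (hf : Continuous f) : Integrable f haarAddCircle :=
  hf.integrable_of_hasCompactSupport (.of_compactSpace f)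

theorem integral_re_fourier_sq (hn : n ≠ 0) :
    ∫ x : AddCircle T, (fourier n x).re ^ 2 ∂haarAddCircle = 1 / 2 := by
  simp_rw [re_fourier_sq]
  rw [integral_add (integrable_const _) (integrable_haarAddCircle_of_continuous (by fun_prop)),
    integral_const_mul, integral_re_fourier (by omega)]
  simp

theorem memLp_top_conjPerturbation (n : ℤ) (c : ℝ) :
    MemLp (conjPerturbation n c : AddCircle T → ℂ) ∞ haarAddCircle :=
  (continuous_conjPerturbation n c).memLp_of_hasCompactSupport (.of_compactSpace _)

theorem integral_inner_one_conjPerturbation (hn : n ≠ 0) (c : ℝ) :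
    ∫ x : AddCircle T, ⟪(1 : ℂ), conjPerturbation n c x⟫ ∂haarAddCircle = 0 := by
  simp only [Complex.inner, map_one, mul_one, conjPerturbation_re, integral_const_mul,
    integral_re_fourier hn, mul_zero]

theorem integral_normRpowQuadForm_conjPerturbation (hn : n ≠ 0) (p c : ℝ) :
    ∫ x : AddCircle T, normRpowQuadForm p 1 (conjPerturbation n c x) ∂haarAddCircle =
      1 + c ^ 2 + (p - 2) * (1 + c) ^ 2 / 2 := by
  have hform (x : AddCircle T) : normRpowQuadForm p 1 (conjPerturbation n c x) =
      (1 - c) ^ 2 + (4 * c + (p - 2) * (1 + c) ^ 2) * (fourier n x).re ^ 2 := by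
    rw [normRpowQuadForm_one, conjPerturbation_re, conjPerturbation_im]
    linear_combination (1 - c) ^ 2 * re_fourier_sq_add_im_fourier_sq n x
  simp_rw [hform]
  rw [integral_add (integrable_const _) (integrable_haarAddCircle_of_continuous (by fun_prop)),
    integral_const_mul, integral_re_fourier_sq hn]
  simp only [integral_const, probReal_univ, one_smul]
  ring

theorem integral_normRpowQuadForm_conjPerturbation_lt (hn : n ≠ 0) {p : ℝ} (hp₀ : 0 < p)
    (hp₂ : p ≠ 2) :
    ∫ x : AddCircle T, normRpowQuadForm p 1 (conjPerturbation n (2 / p - 1) x) ∂haarAddCircle <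
      ∫ x : AddCircle T, normRpowQuadForm p 1 (conjPerturbation n 0 x) ∂haarAddCircle := by
  rw [integral_normRpowQuadForm_conjPerturbation hn, integral_normRpowQuadForm_conjPerturbation hn,
    ← sub_pos]
  have hgap : 0 < (p - 2) ^ 2 / (2 * p) := by
    have := sub_ne_zero.2 hp₂
    positivity
  convert hgap using 1
  field_simp
  ring

theorem eventually_eLpNorm_one_add_smul_conjPerturbation_lt (hn : n ≠ 0) {p : ℝ≥0∞}
    (hp₀ : p ≠ 0) (hp₂ : p ≠ 2) (hp : p ≠ ∞) :
    ∀ᶠ ε : ℝ in 𝓝[≠] 0,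
      eLpNorm (fun x : AddCircle T => 1 + ε • conjPerturbation n (2 / p.toReal - 1) x) p
          haarAddCircle <
        eLpNorm (fun x : AddCircle T => 1 + ε • conjPerturbation n 0 x) p haarAddCircle := by
  have hp₂' : p.toReal ≠ 2 := (ENNReal.toReal_eq_toReal_iff' hp ENNReal.ofNat_ne_top).not.2 hp₂
  refine eventually_eLpNorm_add_smul_lt hp₀ hp norm_one (memLp_top_conjPerturbation n _)
    (memLp_top_conjPerturbation n 0) ?_
    (integral_normRpowQuadForm_conjPerturbation_lt hn (ENNReal.toReal_pos hp₀ hp) hp₂')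
  rw [integral_inner_one_conjPerturbation hn, integral_inner_one_conjPerturbation hn]

theorem eLpNorm_top_one_add_smul_conjPerturbation_lt (n : ℤ) {ε : ℝ} (hε₀ : 0 < ε)
    (hε : ε < 1 / 2) :
    eLpNorm (fun x : AddCircle T => 1 + ε • conjPerturbation n (-1) x) ∞ haarAddCircle <
      eLpNorm (fun x : AddCircle T => 1 + ε • conjPerturbation n 0 x) ∞ haarAddCircle :=
  calc
    _ ≤ ENNReal.ofReal (1 + 2 * ε ^ 2) :=
      eLpNormEssSup_le_of_ae_bound
        (.of_forall (norm_one_add_smul_conjPerturbation_neg_one_le n ε))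
    _ < ENNReal.ofReal (1 + ε) :=
      (ENNReal.ofReal_lt_ofReal_iff (by positivity)).2 (by nlinarith)
    _ = ‖1 + ε • conjPerturbation n 0 (0 : AddCircle T)‖ₑ := by
      have hval : 1 + ε • conjPerturbation n 0 (0 : AddCircle T) = ((1 + ε : ℝ) : ℂ) := by
        simp [conjPerturbation]
      rw [hval, ← ofReal_norm, Complex.norm_real, Real.norm_of_nonneg (by positivity)]
    _ ≤ _ := enorm_le_eLpNorm_top_of_continuous
      (continuous_const.add ((continuous_conjPerturbation n 0).const_smul ε)) 0

theorem wiener_type_lemma_general (hn : n ≠ 0) {p : ℝ≥0∞} (hp₀ : p ≠ 0) (hp₂ : p ≠ 2) :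
    ∀ᶠ ε : ℝ in 𝓝[>] 0,
      eLpNorm (fun x : AddCircle T =>
          ((2 / p.toReal - 1 : ℝ) : ℂ) * (ε : ℂ) * fourier (-n) x + 1 + (ε : ℂ) * fourier n x) p
          haarAddCircle <
        eLpNorm (fun x : AddCircle T => 1 + (ε : ℂ) * fourier n x) p haarAddCircle := by
  suffices ∀ᶠ ε : ℝ in 𝓝[>] 0,
      eLpNorm (fun x : AddCircle T => 1 + ε • conjPerturbation n (2 / p.toReal - 1) x) p
          haarAddCircle <
        eLpNorm (fun x : AddCircle T => 1 + ε • conjPerturbation n 0 x) p haarAddCircle by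
    refine this.mono fun ε hε => ?_
    convert hε using 3
    · rw [conjPerturbation, Complex.real_smul]
      ring
    · simp [conjPerturbation]
  rcases eq_or_ne p ∞ with rfl | hp
  · filter_upwards [Ioo_mem_nhdsGT (show (0 : ℝ) < 1 / 2 by norm_num)] with ε hε
    simpa using eLpNorm_top_one_add_smul_conjPerturbation_lt n hε.1 hε.2
  · exact (eventually_eLpNorm_one_add_smul_conjPerturbation_lt hn hp₀ hp₂ hp).filter_mono
      (nhdsGT_le_nhdsNE 0)

end Circle

end

/-- Lemma 2.3: for `1 ≤ p ≤ ∞`, `p ≠ 2` and `c_p = 2/p - 1` (with `c_∞ = -1`; note that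
`2 / p.toReal - 1 = -1` when `p = ∞`), one has
`‖c_p ε z̄ + 1 + ε z‖_p < ‖1 + ε z‖_p` for all sufficiently small `ε > 0`. -/
theorem wiener_type_lemma (p : ℝ≥0∞) (hp1 : 1 ≤ p) (hp2 : p ≠ 2) :
    ∃ ε₀ : ℝ, 0 < ε₀ ∧ ∀ ε : ℝ, 0 < ε → ε < ε₀ →
      eLpNorm (fun x : AddCircle (1 : ℝ) =>
          ((2 / p.toReal - 1 : ℝ) : ℂ) * (ε : ℂ) * fourier (-1) x
            + 1 + (ε : ℂ) * fourier 1 x) p volume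
        < eLpNorm (fun x : AddCircle (1 : ℝ) => 1 + (ε : ℂ) * fourier 1 x) p volume := by
  obtain ⟨ε₀, hε₀, h⟩ := mem_nhdsGT_iff_exists_Ioo_subset.1
    (wiener_type_lemma_general (T := 1) one_ne_zero (zero_lt_one.trans_le hp1).ne' hp2)
  exact ⟨ε₀, hε₀, fun ε h₁ h₂ => by
    simpa [AddCircle.volume_eq_smul_haarAddCircle] using h ⟨h₁, h₂⟩⟩

end
end

section
/- Fix 1 ≤ p < ∞ with p ≠ 2, and set c_p := 1 − p/2. Then there exists ε₀ > 0 such that for every 0 < ε < ε₀ one has the strict inequality ‖1 + ε(z₁ + z₂) + c_p ε² z₁z₂‖_p < ‖1 + ε(z₁ + z₂)‖_p, where the norms are of the corresponding functions of (z₁, z₂) on 𝕋². -/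
open MeasureTheory
open scoped ENNReal

noncomputable section

/-!
Put `s = p / 2`, `A = z₁ + z₂` and `B = c z₁ z₂`, so that the `p`-th power of the norm of
`1 + ε A + ε² B` is the integral of `|f (ε A + ε² B)|²` with `f u = (1 + u) ^ s`. Rotating both
coordinates by a common angle replaces `ε` by `w` on the circle `|w| = ε`, so the integrand may be
averaged over that circle. There `w ↦ f (w a + w² b)` is holomorphic, and by Parseval the average is
`1 + ε² |s a|² + ε⁴ |s b + s (s - 1) / 2 * a²|² + O(ε⁶)`. The coefficient `c` therefore enters first
through `ε⁴ ∫ |s B + s (s - 1) / 2 * A²|²`, which equals its value at `c = 0` plus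
`s² (|c|² - (2 - p) Re c)`. The added term is smallest at `c = 1 - p / 2`, where it is
`-s² (1 - p / 2)²`.
-/

section

open Real Complex Set Metric Filter Topology Asymptotics ComplexConjugate

lemma circleAverage_norm_sq_const_add_mul {g : ℂ → ℂ} {r : ℝ} (a : ℂ)
    (hg : DiffContOnCl ℂ g (ball 0 |r|)) :
    circleAverage (fun w ↦ ‖a + w * g w‖ ^ 2) 0 r
      = ‖a‖ ^ 2 + r ^ 2 * circleAverage (fun w ↦ ‖g w‖ ^ 2) 0 r := by
  have hgc : ContinuousOn g (sphere 0 |r|) :=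
    hg.continuousOn_ball.mono sphere_subset_closedBall
  have hcross : DiffContOnCl ℂ (fun w ↦ conj a * (w * g w)) (ball 0 |r|) :=
    (diffContOnCl_const (c := conj a)).smul (differentiable_id.diffContOnCl.smul hg)
  have hmean : circleAverage (fun w ↦ (conj a * (w * g w)).re) 0 r = 0 := by
    have h := reCLM.circleAverage_comp_comm (f := fun w ↦ conj a * (w * g w)) (c := 0) (R := r)
      (ContinuousOn.circleIntegrable' (by fun_prop))
    rw [hcross.circleAverage] at h
    simpa [Function.comp_def] using h
  have hexpand : EqOn (fun w ↦ ‖a + w * g w‖ ^ 2)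
      (fun w ↦ ‖a‖ ^ 2 + (2 * (conj a * (w * g w)).re + r ^ 2 * ‖g w‖ ^ 2)) (sphere 0 |r|) := by
    intro w hw
    have hw : r ^ 2 = ‖w‖ ^ 2 := by rw [mem_sphere_zero_iff_norm.1 hw, sq_abs]
    simp only [hw, Complex.sq_norm, normSq_apply, add_re, add_im, mul_re, mul_im, conj_re, conj_im]
    ring
  rw [circleAverage_congr_sphere hexpand, circleAverage_fun_add (circleIntegrable_const _ _ _)
    (ContinuousOn.circleIntegrable' (by fun_prop)), circleAverage_fun_add
    (ContinuousOn.circleIntegrable' (by fun_prop))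
    (ContinuousOn.circleIntegrable' (by fun_prop)), circleAverage_const]
  simp only [← smul_eq_mul (a := (2 : ℝ)), ← smul_eq_mul (a := r ^ 2), circleAverage_fun_smul,
    hmean, smul_zero, zero_add]

lemma exists_eq_sum_coeff_mul_pow_add {f : ℂ → ℂ} {s : Set ℂ}
    {p : FormalMultilinearSeries ℂ ℂ ℂ} (hs : s ∈ 𝓝 0) (hf : DifferentiableOn ℂ f s)
    (hp : HasFPowerSeriesAt f p 0) (n : ℕ) :
    ∃ g : ℂ → ℂ, DifferentiableOn ℂ g s ∧
      ∀ u, f u = ∑ k ∈ Finset.range n, p.coeff k * u ^ k + u ^ n * g u := by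
  induction n generalizing f p with
  | zero => exact ⟨f, hf, by simp⟩
  | succ n ih =>
    obtain ⟨g, hg, hfg⟩ :=
      ih ((differentiableOn_dslope hs).2 hf) hp.has_fpower_series_dslope_fslope
    refine ⟨g, hg, fun u ↦ ?_⟩
    have hslope : f u = f 0 + u * dslope f 0 u := by
      simpa [sub_eq_iff_eq_add'] using (sub_smul_dslope f 0 u).symm
    have hzero : f 0 = p.coeff 0 := (hp.coeff_zero 1).symm
    rw [hslope, hfg, hzero, Finset.sum_range_succ', mul_add, Finset.mul_sum]
    simp only [FormalMultilinearSeries.coeff_fslope, pow_succ]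
    ring_nf

lemma circleAverage_norm_sq_quadratic_comp {f g : ℂ → ℂ} {c : ℕ → ℂ} {a b : ℂ} {r : ℝ}
    {s : Set ℂ} (hg : DifferentiableOn ℂ g s)
    (hs : MapsTo (fun w ↦ w * a + w ^ 2 * b) (closedBall 0 |r|) s)
    (hf : ∀ u, f u = ∑ k ∈ Finset.range 3, c k * u ^ k + u ^ 3 * g u) :
    circleAverage (fun w ↦ ‖f (w * a + w ^ 2 * b)‖ ^ 2) 0 r
      = ‖c 0‖ ^ 2 + r ^ 2 * ‖c 1 * a‖ ^ 2 + r ^ 4 * ‖c 1 * b + c 2 * a ^ 2‖ ^ 2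
        + r ^ 6 * circleAverage (fun w ↦ ‖c 2 * (2 * a * b + w * b ^ 2)
            + (a + w * b) ^ 3 * g (w * a + w ^ 2 * b)‖ ^ 2) 0 r := by
  set k : ℂ → ℂ := fun w ↦ c 2 * (2 * a * b + w * b ^ 2)
    + (a + w * b) ^ 3 * g (w * a + w ^ 2 * b) with hk
  have hkd : DifferentiableOn ℂ k (closedBall 0 |r|) :=
    .add (by fun_prop) (.mul (by fun_prop) (hg.comp (by fun_prop) hs))
  have hdiff : ∀ {h : ℂ → ℂ}, DifferentiableOn ℂ h (closedBall 0 |r|) →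
      DiffContOnCl ℂ h (ball 0 |r|) :=
    fun hh ↦ (hh.mono closure_ball_subset_closedBall).diffContOnCl
  have hfactor : ∀ w, f (w * a + w ^ 2 * b)
      = c 0 + w * (c 1 * a + w * ((c 1 * b + c 2 * a ^ 2) + w * k w)) := by
    intro w
    simp only [hf, hk, Finset.sum_range_succ, Finset.sum_range_zero]
    ring
  simp only [hfactor]
  rw [circleAverage_norm_sq_const_add_mul _ (hdiff (by fun_prop)),
    circleAverage_norm_sq_const_add_mul _ (hdiff (by fun_prop)),
    circleAverage_norm_sq_const_add_mul _ (hdiff hkd)]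
  ring

lemma eventually_norm_mul_add_sq_mul_lt (M : ℝ) {R : ℝ} (hR : 0 < R) :
    ∀ᶠ r in 𝓝[>] (0 : ℝ), ∀ a b w : ℂ, ‖a‖ ≤ M → ‖b‖ ≤ M → ‖w‖ ≤ r →
      ‖w * a + w ^ 2 * b‖ < R := by
  have hsmall : ∀ᶠ r in 𝓝 (0 : ℝ), r * M + r ^ 2 * M < R :=
    (by fun_prop : ContinuousAt (fun r : ℝ ↦ r * M + r ^ 2 * M) 0).eventually_lt_const
      (by simpa using hR)
  filter_upwards [nhdsWithin_le_nhds hsmall] with r hr a b w ha hb hw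
  calc ‖w * a + w ^ 2 * b‖ ≤ ‖w * a‖ + ‖w ^ 2 * b‖ := norm_add_le _ _
    _ = ‖w‖ * ‖a‖ + ‖w‖ ^ 2 * ‖b‖ := by rw [norm_mul, norm_mul, norm_pow]
    _ ≤ r * M + r ^ 2 * M := by gcongr; exact (norm_nonneg w).trans hw
    _ < R := hr

lemma norm_quadratic_remainder_le {a b c w y : ℂ} {M G : ℝ} (ha : ‖a‖ ≤ M) (hb : ‖b‖ ≤ M)
    (hw : ‖w‖ ≤ 1) (hy : ‖y‖ ≤ G) :
    ‖c * (2 * a * b + w * b ^ 2) + (a + w * b) ^ 3 * y‖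
      ≤ ‖c‖ * (3 * M ^ 2) + (2 * M) ^ 3 * G := by
  have hM : 0 ≤ M := (norm_nonneg a).trans ha
  have hquad : ‖2 * a * b + w * b ^ 2‖ ≤ 3 * M ^ 2 :=
    calc ‖2 * a * b + w * b ^ 2‖ ≤ ‖2 * a * b‖ + ‖w * b ^ 2‖ := norm_add_le _ _
      _ = 2 * ‖a‖ * ‖b‖ + ‖w‖ * ‖b‖ ^ 2 := by simp
      _ ≤ 2 * M * M + 1 * M ^ 2 := by gcongr
      _ = 3 * M ^ 2 := by ring
  have hlin : ‖a + w * b‖ ≤ 2 * M :=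
    calc ‖a + w * b‖ ≤ ‖a‖ + ‖w * b‖ := norm_add_le _ _
      _ = ‖a‖ + ‖w‖ * ‖b‖ := by rw [norm_mul]
      _ ≤ M + 1 * M := by gcongr
      _ = 2 * M := by ring
  refine (norm_add_le _ _).trans ?_
  rw [norm_mul, norm_mul, norm_pow]
  gcongr

lemma exists_abs_circleAverage_norm_sq_sub_le {f : ℂ → ℂ}
    {p : FormalMultilinearSeries ℂ ℂ ℂ} (hp : HasFPowerSeriesAt f p 0) (M : ℝ) :
    ∃ K, ∀ᶠ r in 𝓝[>] (0 : ℝ), ∀ a b : ℂ, ‖a‖ ≤ M → ‖b‖ ≤ M →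
      |circleAverage (fun w ↦ ‖f (w * a + w ^ 2 * b)‖ ^ 2) 0 r
        - (‖p.coeff 0‖ ^ 2 + r ^ 2 * ‖p.coeff 1 * a‖ ^ 2
          + r ^ 4 * ‖p.coeff 1 * b + p.coeff 2 * a ^ 2‖ ^ 2)| ≤ K * r ^ 6 := by
  obtain ⟨R, hR, hf⟩ := hp.analyticAt.exists_ball_analyticOnNhd
  obtain ⟨g, hg, hfg⟩ :=
    exists_eq_sum_coeff_mul_pow_add (ball_mem_nhds 0 hR) hf.differentiableOn hp 3
  replace hg := hg.mono (closedBall_subset_ball (half_lt_self hR))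
  obtain ⟨G, hG⟩ := (isCompact_closedBall 0 (R / 2)).exists_bound_of_continuousOn hg.continuousOn
  refine ⟨(‖p.coeff 2‖ * (3 * M ^ 2) + (2 * M) ^ 3 * G) ^ 2, ?_⟩
  filter_upwards [Ioo_mem_nhdsGT one_pos, eventually_norm_mul_add_sq_mul_lt M (half_pos hR)]
    with r ⟨hr0, hr1⟩ hrR a b ha hb
  have hmaps : MapsTo (fun w ↦ w * a + w ^ 2 * b) (closedBall 0 |r|) (closedBall 0 (R / 2)) := by
    intro w hw
    rw [abs_of_pos hr0, mem_closedBall_zero_iff] at hw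
    exact mem_closedBall_zero_iff.2 (hrR a b w ha hb hw).le
  have hremainder : ∀ w ∈ sphere (0 : ℂ) |r|, ‖p.coeff 2 * (2 * a * b + w * b ^ 2)
      + (a + w * b) ^ 3 * g (w * a + w ^ 2 * b)‖ ^ 2
        ≤ (‖p.coeff 2‖ * (3 * M ^ 2) + (2 * M) ^ 3 * G) ^ 2 := by
    intro w hw
    have hw1 : ‖w‖ ≤ 1 := by rw [mem_sphere_zero_iff_norm.1 hw, abs_of_pos hr0]; exact hr1.le
    gcongr
    exact norm_quadratic_remainder_le ha hb hw1 (hG _ (hmaps (sphere_subset_closedBall hw)))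
  have hgc : ContinuousOn (fun w ↦ g (w * a + w ^ 2 * b)) (sphere 0 |r|) :=
    hg.continuousOn.comp (by fun_prop) (hmaps.mono_left sphere_subset_closedBall)
  rw [circleAverage_norm_sq_quadratic_comp hg hmaps hfg, add_sub_cancel_left, mul_comm,
    abs_of_nonneg (mul_nonneg (circleAverage_nonneg_of_nonneg fun _ _ ↦ by positivity)
      (by positivity))]
  gcongr
  refine circleAverage_mono_on_of_le_circle (ContinuousOn.circleIntegrable' ?_) hremainder
  exact ContinuousOn.pow (.norm (.add (by fun_prop) (.mul (by fun_prop) hgc))) 2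

section Rotation

variable {X : Type*}

/-- `f` is multiplied by `exp (i n θ)` when its argument is rotated by `θ`. On the torus with the
diagonal rotation this holds for homogeneous polynomials of degree `n` in the coordinates. -/
def HasWeight (T : ℝ → X → X) (n : ℕ) (f : X → ℂ) : Prop :=
  ∀ θ x, f (T θ x) = cexp (θ * I) ^ n * f x

lemma HasWeight.circleAverage_comp {T : ℝ → X → X} {A B : X → ℂ}
    (hA : HasWeight T 1 A) (hB : HasWeight T 2 B) (Φ : ℂ → ℝ) (r : ℝ) (x : X) :
    circleAverage (fun w ↦ Φ (w * A x + w ^ 2 * B x)) 0 r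
      = (2 * π)⁻¹ * ∫ θ in 0..2 * π, Φ (r * A (T θ x) + r ^ 2 * B (T θ x)) := by
  simp only [circleAverage_def, circleMap_zero, smul_eq_mul, hA _ _, hB _ _, pow_one, mul_pow,
    mul_assoc]

variable [TopologicalSpace X] [MeasurableSpace X]

/-- A continuous family of measure-preserving maps indexed by an angle. The group law is not part of
the definition: all that matters is the way weight functions transform. -/
structure IsRotationFamily (T : ℝ → X → X) (μ : Measure X) : Prop where
  continuous_uncurry : Continuous (Function.uncurry T)
  measurePreserving (θ : ℝ) : MeasurePreserving (T θ) μ μ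

variable [CompactSpace X] [OpensMeasurableSpace X] {μ : Measure X} {T : ℝ → X → X}

lemma integrable_of_continuous_of_compactSpace {E : Type*} [NormedAddCommGroup E]
    [IsFiniteMeasure μ] {f : X → E} (hf : Continuous f) : Integrable f μ :=
  hf.integrable_of_hasCompactSupport (.of_compactSpace _)

lemma IsRotationFamily.integrable_comp_prod [IsFiniteMeasure μ] (hT : IsRotationFamily T μ)
    {N : X → ℝ} (hN : Continuous N) (a b : ℝ) :
    Integrable (Function.uncurry fun x θ ↦ N (T θ x)) (μ.prod (volume.restrict (Ioc a b))) := by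
  obtain ⟨C, hC⟩ := isCompact_univ.exists_bound_of_continuousOn hN.continuousOn
  exact .of_bound (hN.comp (hT.continuous_uncurry.comp continuous_swap)).aestronglyMeasurable C
    (.of_forall fun _ ↦ hC _ (mem_univ _))

lemma IsRotationFamily.integrable_average [IsFiniteMeasure μ] (hT : IsRotationFamily T μ)
    {N : X → ℝ} (hN : Continuous N) :
    Integrable (fun x ↦ (2 * π)⁻¹ * ∫ θ in 0..2 * π, N (T θ x)) μ := by
  simp only [intervalIntegral.integral_of_le two_pi_pos.le]
  exact (hT.integrable_comp_prod hN 0 (2 * π)).integral_prod_left.const_mul _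

lemma IsRotationFamily.integral_average [IsFiniteMeasure μ] (hT : IsRotationFamily T μ)
    {N : X → ℝ} (hN : Continuous N) :
    ∫ x, (2 * π)⁻¹ * (∫ θ in 0..2 * π, N (T θ x)) ∂μ = ∫ x, N x ∂μ := by
  have hinv : ∀ θ, ∫ x, N (T θ x) ∂μ = ∫ x, N x ∂μ := fun θ ↦ by
    rw [← integral_map (hT.measurePreserving θ).aemeasurable hN.aestronglyMeasurable,
      (hT.measurePreserving θ).map_eq]
  simp only [intervalIntegral.integral_of_le two_pi_pos.le]
  rw [integral_const_mul, integral_integral_swap (hT.integrable_comp_prod hN 0 (2 * π))]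
  simp only [hinv, setIntegral_const, volume_real_Ioc_of_le two_pi_pos.le, sub_zero, smul_eq_mul]
  rw [inv_mul_cancel_left₀ two_pi_pos.ne']

lemma IsRotationFamily.abs_integral_sub_le [IsProbabilityMeasure μ] (hT : IsRotationFamily T μ)
    {N m : X → ℝ} (hN : Continuous N) (hm : Integrable m μ) {C : ℝ}
    (h : ∀ x, |(2 * π)⁻¹ * (∫ θ in 0..2 * π, N (T θ x)) - m x| ≤ C) :
    |∫ x, N x ∂μ - ∫ x, m x ∂μ| ≤ C := by
  rw [← hT.integral_average hN, ← integral_sub (hT.integrable_average hN) hm]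
  simp only [← Real.norm_eq_abs] at h ⊢
  simpa using norm_integral_le_of_norm_le_const (μ := μ) (.of_forall h)

lemma IsRotationFamily.integral_norm_sq_comp_isBigO [IsProbabilityMeasure μ]
    (hT : IsRotationFamily T μ) {A B : X → ℂ} (hA : HasWeight T 1 A) (hB : HasWeight T 2 B)
    (hAc : Continuous A) (hBc : Continuous B) {f : ℂ → ℂ} {p : FormalMultilinearSeries ℂ ℂ ℂ}
    (hp : HasFPowerSeriesAt f p 0) :
    (fun r : ℝ ↦ ∫ x, ‖f (r * A x + r ^ 2 * B x)‖ ^ 2 ∂μ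
      - (‖p.coeff 0‖ ^ 2 + r ^ 2 * ∫ x, ‖p.coeff 1 * A x‖ ^ 2 ∂μ
        + r ^ 4 * ∫ x, ‖p.coeff 1 * B x + p.coeff 2 * A x ^ 2‖ ^ 2 ∂μ))
      =O[𝓝[>] 0] fun r ↦ r ^ 6 := by
  obtain ⟨R, hR, hf⟩ := hp.analyticAt.exists_ball_analyticOnNhd
  obtain ⟨M, hM⟩ := isCompact_univ.exists_bound_of_continuousOn (hAc.prodMk hBc).continuousOn
  have hAM : ∀ x, ‖A x‖ ≤ M := fun x ↦ (norm_fst_le _).trans (hM x trivial)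
  have hBM : ∀ x, ‖B x‖ ≤ M := fun x ↦ (norm_snd_le _).trans (hM x trivial)
  obtain ⟨K, hK⟩ := exists_abs_circleAverage_norm_sq_sub_le hp M
  refine .of_bound K ?_
  filter_upwards [hK, eventually_norm_mul_add_sq_mul_lt M hR, self_mem_nhdsWithin]
    with r hr hrR (hr0 : 0 < r)
  have hmem : ∀ x, r * A x + r ^ 2 * B x ∈ ball (0 : ℂ) R := fun x ↦
    mem_ball_zero_iff.2 (hrR _ _ r (hAM x) (hBM x) (by simp [abs_of_pos hr0]))
  have hN : Continuous fun x ↦ ‖f (r * A x + r ^ 2 * B x)‖ ^ 2 :=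
    (hf.continuousOn.comp_continuous (by fun_prop) hmem).norm.pow 2
  have hmain : ∫ x, (‖p.coeff 0‖ ^ 2 + r ^ 2 * ‖p.coeff 1 * A x‖ ^ 2
        + r ^ 4 * ‖p.coeff 1 * B x + p.coeff 2 * A x ^ 2‖ ^ 2) ∂μ
      = ‖p.coeff 0‖ ^ 2 + r ^ 2 * ∫ x, ‖p.coeff 1 * A x‖ ^ 2 ∂μ
        + r ^ 4 * ∫ x, ‖p.coeff 1 * B x + p.coeff 2 * A x ^ 2‖ ^ 2 ∂μ := by
    rw [integral_add, integral_add, integral_const_mul, integral_const_mul, integral_const,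
      probReal_univ, one_smul] <;>
    exact integrable_of_continuous_of_compactSpace (by fun_prop)
  rw [← hmain, norm_of_nonneg (by positivity : 0 ≤ r ^ 6)]
  refine hT.abs_integral_sub_le hN (integrable_of_continuous_of_compactSpace (by fun_prop))
    fun x ↦ ?_
  rw [← hA.circleAverage_comp hB (fun u ↦ ‖f u‖ ^ 2)]
  exact hr _ _ (hAM x) (hBM x)

lemma IsRotationFamily.eventually_integral_norm_sq_comp_lt [IsProbabilityMeasure μ]
    (hT : IsRotationFamily T μ) {A B B' : X → ℂ} (hA : HasWeight T 1 A) (hB : HasWeight T 2 B)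
    (hB' : HasWeight T 2 B') (hAc : Continuous A) (hBc : Continuous B) (hBc' : Continuous B')
    {f : ℂ → ℂ} {p : FormalMultilinearSeries ℂ ℂ ℂ} (hp : HasFPowerSeriesAt f p 0)
    (hlt : ∫ x, ‖p.coeff 1 * B x + p.coeff 2 * A x ^ 2‖ ^ 2 ∂μ
      < ∫ x, ‖p.coeff 1 * B' x + p.coeff 2 * A x ^ 2‖ ^ 2 ∂μ) :
    ∀ᶠ r : ℝ in 𝓝[>] 0, ∫ x, ‖f (r * A x + r ^ 2 * B x)‖ ^ 2 ∂μ
      < ∫ x, ‖f (r * A x + r ^ 2 * B' x)‖ ^ 2 ∂μ := by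
  have hdiff := (hT.integral_norm_sq_comp_isBigO hA hB hAc hBc hp).sub
    (hT.integral_norm_sq_comp_isBigO hA hB' hAc hBc' hp)
  have hlittle : (fun r : ℝ ↦ r ^ 6) =o[𝓝[>] 0] fun r ↦ r ^ 4 :=
    (isLittleO_pow_pow (by norm_num)).mono nhdsWithin_le_nhds
  filter_upwards [(hdiff.trans_isLittleO hlittle).bound (half_pos (sub_pos.2 hlt)),
    self_mem_nhdsWithin] with r hr (hr0 : 0 < r)
  have hpos := mul_pos (sub_pos.2 hlt) (pow_pos hr0 4)
  rw [norm_of_nonneg (by positivity : 0 ≤ r ^ 4)] at hr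
  linarith [(abs_le.1 hr).2]

end Rotation

section Torus

variable {d : Type*}

instance : IsProbabilityMeasure (volume : Measure UnitAddCircle) := ⟨UnitAddCircle.measure_univ⟩

/-- Rotation of every coordinate of the torus by the angle `θ`, measured in radians although the
coordinates have period `1`. -/
def torusRotation (θ : ℝ) (z : UnitAddTorus d) : UnitAddTorus d :=
  z + fun _ ↦ ((θ / (2 * π) : ℝ) : UnitAddCircle)

lemma isRotationFamily_torusRotation [Fintype d] :
    IsRotationFamily torusRotation (volume : Measure (UnitAddTorus d)) where
  continuous_uncurry := by
    have := AddCircle.continuous_mk' (1 : ℝ)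
    unfold torusRotation Function.uncurry
    fun_prop
  measurePreserving θ := measurePreserving_add_right volume _

lemma fourier_one_torusRotation (θ : ℝ) (z : UnitAddTorus d) (i : d) :
    fourier 1 (torusRotation θ z i) = cexp (θ * I) * fourier 1 (z i) := by
  have hθ : fourier 1 ((θ / (2 * π) : ℝ) : UnitAddCircle) = cexp (θ * I) := by
    rw [fourier_coe_apply]
    congr 1
    push_cast
    field_simp
  rw [← hθ, mul_comm]
  simp [torusRotation, AddCircle.toCircle_add]

lemma hasWeight_fourier_add_fourier (i j : d) :
    HasWeight torusRotation 1 fun z : UnitAddTorus d ↦ fourier 1 (z i) + fourier 1 (z j) := by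
  intro θ z
  simp only [fourier_one_torusRotation]
  ring

lemma hasWeight_const_mul_fourier_mul_fourier (c : ℂ) (i j : d) :
    HasWeight torusRotation 2
      fun z : UnitAddTorus d ↦ c * (fourier 1 (z i) * fourier 1 (z j)) := by
  intro θ z
  simp only [fourier_one_torusRotation]
  ring

lemma integral_re_fourier_mul_conj_fourier [Fintype d] {i j : d} (hij : i ≠ j) :
    ∫ z : UnitAddTorus d, ((fourier 1 (z i) : ℂ) * conj (fourier 1 (z j) : ℂ)).re = 0 := by
  classical
  refine integral_eq_zero_of_add_right_eq_neg
    (g := Pi.single i ((1 / 2 / (1 : ℤ) : ℝ) : UnitAddCircle)) fun z ↦ ?_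
  rw [Pi.add_apply, Pi.add_apply, Pi.single_eq_same, Pi.single_eq_of_ne' hij, add_zero,
    fourier_add_half_inv_index one_ne_zero one_pos, neg_mul, neg_re]

lemma norm_sq_mul_mul_add_mul_add_sq {a b : ℂ} (ha : ‖a‖ = 1) (hb : ‖b‖ = 1) (α γ : ℂ) :
    ‖γ * (a * b) + α * (a + b) ^ 2‖ ^ 2
      = ‖α * (a + b) ^ 2‖ ^ 2 + (‖γ‖ ^ 2 + 4 * (γ * conj α).re)
        + 4 * (γ * conj α).re * (a * conj b).re := by
  have ha' : a * conj a = 1 := by rw [mul_conj, normSq_eq_norm_sq, ha]; norm_num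
  have hb' : b * conj b = 1 := by rw [mul_conj, normSq_eq_norm_sq, hb]; norm_num
  have hre : a * conj b + conj a * b = ((2 * (a * conj b).re : ℝ) : ℂ) := by
    rw [← add_conj, map_mul, conj_conj]
  have hcross : a * b * conj ((a + b) ^ 2) = ((2 + 2 * (a * conj b).re : ℝ) : ℂ) := by
    rw [ofReal_add, ← hre, map_pow, map_add, ofReal_ofNat]
    linear_combination (b * conj a + 2 * b * conj b) * ha' + (2 + a * conj b) * hb'
  have hinner : γ * (a * b) * conj (α * (a + b) ^ 2)
      = γ * conj α * ((2 + 2 * (a * conj b).re : ℝ) : ℂ) := by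
    rw [← hcross, map_mul]
    ring
  rw [Complex.sq_norm, normSq_add, hinner, re_mul_ofReal, ← Complex.sq_norm, ← Complex.sq_norm,
    norm_mul, norm_mul a, ha, hb]
  ring

lemma integral_norm_sq_mul_fourier_add [Fintype d] {i j : d} (hij : i ≠ j) (α γ : ℂ) :
    ∫ z : UnitAddTorus d, ‖γ * (fourier 1 (z i) * fourier 1 (z j))
        + α * (fourier 1 (z i) + fourier 1 (z j)) ^ 2‖ ^ 2
      = (∫ z : UnitAddTorus d, ‖α * (fourier 1 (z i) + fourier 1 (z j)) ^ 2‖ ^ 2)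
        + (‖γ‖ ^ 2 + 4 * (γ * conj α).re) := by
  have hnorm : ∀ t : UnitAddCircle, ‖(fourier 1 t : ℂ)‖ = 1 := fun t ↦ Circle.norm_coe _
  simp only [norm_sq_mul_mul_add_mul_add_sq (hnorm _) (hnorm _)]
  rw [integral_add, integral_add, integral_const_mul, integral_re_fourier_mul_conj_fourier hij,
    integral_const, probReal_univ, one_smul, mul_zero, add_zero]
  all_goals exact integrable_of_continuous_of_compactSpace (by fun_prop)

end Torus

lemma binomialSeries_coeff (s : ℂ) (n : ℕ) : (binomialSeries ℂ s).coeff n = Ring.choose s n :=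
  FormalMultilinearSeries.coeff_ofScalars

lemma ring_choose_two (s : ℂ) : Ring.choose s 2 = s * (s - 1) / 2 := by
  have h := Ring.descPochhammer_eq_factorial_smul_choose s 2
  simp only [descPochhammer_succ_right, descPochhammer_zero, Nat.cast_zero, Nat.cast_one, sub_zero,
    one_mul, Polynomial.smeval_mul, Polynomial.smeval_sub, Polynomial.smeval_X,
    Polynomial.smeval_one, pow_zero, pow_one, one_smul, Nat.factorial_two, nsmul_eq_mul,
    Nat.cast_ofNat] at h
  linear_combination -h / 2

lemma norm_rpow_eq_norm_cpow_half_sq (z : ℂ) (r : ℝ) :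
    ‖z‖ ^ r = ‖z ^ ((r / 2 : ℝ) : ℂ)‖ ^ 2 := by
  rw [norm_cpow_real, ← rpow_natCast, ← rpow_mul (norm_nonneg z), Nat.cast_ofNat,
    div_mul_cancel₀ r two_ne_zero]

lemma eLpNorm_lt_eLpNorm_of_integral_norm_rpow_lt {α E : Type*} [MeasurableSpace α]
    {μ : Measure α} [NormedAddCommGroup E] {p : ℝ≥0∞} (hp0 : p ≠ 0) (hptop : p ≠ ∞) {f g : α → E}
    (hf : MemLp f p μ) (hg : MemLp g p μ)
    (h : ∫ x, ‖f x‖ ^ p.toReal ∂μ < ∫ x, ‖g x‖ ^ p.toReal ∂μ) :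
    eLpNorm f p μ < eLpNorm g p μ := by
  have hnonneg : 0 ≤ ∫ x, ‖f x‖ ^ p.toReal ∂μ := integral_nonneg fun x ↦ by positivity
  rw [hf.eLpNorm_eq_integral_rpow_norm hp0 hptop, hg.eLpNorm_eq_integral_rpow_norm hp0 hptop,
    ENNReal.ofReal_lt_ofReal_iff (rpow_pos_of_pos (hnonneg.trans_lt h) _)]
  exact rpow_lt_rpow hnonneg h (inv_pos.2 (ENNReal.toReal_pos hp0 hptop))

lemma norm_sq_add_four_mul_re (s : ℝ) (c : ℂ) :
    ‖s * c‖ ^ 2 + 4 * (s * c * conj (s * (s - 1) / 2 : ℂ)).re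
      = s ^ 2 * (‖c‖ ^ 2 - 2 * (1 - s) * c.re) := by
  have hreal : (s * (s - 1) / 2 : ℂ) = ((s * (s - 1) / 2 : ℝ) : ℂ) := by push_cast; rfl
  rw [hreal, conj_ofReal, re_mul_ofReal, re_ofReal_mul, norm_mul, norm_real, mul_pow, norm_eq_abs,
    sq_abs]
  ring

lemma eventually_integral_norm_rpow_lt {d : Type*} [Fintype d] {i j : d} (hij : i ≠ j) {q : ℝ}
    (hq : q ≠ 0) {c : ℂ} (hc : ‖c‖ ^ 2 < (2 - q) * c.re) :
    ∀ᶠ r : ℝ in 𝓝[>] 0,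
      ∫ z : UnitAddTorus d, ‖1 + r * (fourier 1 (z i) + fourier 1 (z j))
          + c * r ^ 2 * (fourier 1 (z i) * fourier 1 (z j))‖ ^ q
        < ∫ z : UnitAddTorus d, ‖1 + r * (fourier 1 (z i) + fourier 1 (z j))‖ ^ q := by
  set s : ℝ := q / 2 with hs
  have hneg : s ^ 2 * (‖c‖ ^ 2 - 2 * (1 - s) * c.re) < 0 :=
    mul_neg_of_pos_of_neg (by positivity) (by linear_combination hc + 2 * c.re * hs)
  have hcoeff : ∫ z : UnitAddTorus d, ‖(s : ℂ) * (c * (fourier 1 (z i) * fourier 1 (z j)))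
        + s * (s - 1) / 2 * (fourier 1 (z i) + fourier 1 (z j)) ^ 2‖ ^ 2
      < ∫ z : UnitAddTorus d, ‖(s : ℂ) * 0
        + s * (s - 1) / 2 * (fourier 1 (z i) + fourier 1 (z j)) ^ 2‖ ^ 2 := by
    simp only [← mul_assoc (s : ℂ) c, mul_zero, zero_add]
    rw [integral_norm_sq_mul_fourier_add hij, norm_sq_add_four_mul_re]
    exact add_lt_of_neg_right _ hneg
  have hlt := isRotationFamily_torusRotation.eventually_integral_norm_sq_comp_lt
    (hasWeight_fourier_add_fourier i j) (hasWeight_const_mul_fourier_mul_fourier c i j)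
    (B' := fun _ ↦ 0) (fun _ _ ↦ (mul_zero _).symm) (by fun_prop) (by fun_prop) (by fun_prop)
    (f := fun u ↦ (1 + u) ^ (s : ℂ)) (p := binomialSeries ℂ (s : ℂ))
    one_add_cpow_hasFPowerSeriesAt_zero
    (by simpa only [binomialSeries_coeff, Ring.choose_one_right, ring_choose_two] using hcoeff)
  filter_upwards [hlt] with r hr
  simpa only [hs, ← norm_rpow_eq_norm_cpow_half_sq, mul_zero, add_zero, ← add_assoc,
    ← mul_assoc _ c, mul_comm _ c] using hr

lemma norm_sq_one_sub_half_lt {q : ℝ} (hq : q ≠ 2) :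
    ‖((1 - q / 2 : ℝ) : ℂ)‖ ^ 2 < (2 - q) * ((1 - q / 2 : ℝ) : ℂ).re := by
  rw [norm_real, ofReal_re, norm_eq_abs, sq_abs]
  linarith [sq_pos_of_ne_zero (sub_ne_zero.2 hq)]

theorem plane_lemma_general {d : Type*} [Fintype d] {i j : d} (hij : i ≠ j) {p : ℝ≥0∞}
    (hp0 : p ≠ 0) (hptop : p ≠ ∞) {c : ℂ} (hc : ‖c‖ ^ 2 < (2 - p.toReal) * c.re) :
    ∃ ε₀ : ℝ, 0 < ε₀ ∧ ∀ ε : ℝ, 0 < ε → ε < ε₀ →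
      eLpNorm (fun z : d → AddCircle (1 : ℝ) =>
          1 + (ε : ℂ) * (fourier 1 (z i) + fourier 1 (z j))
            + c * (ε : ℂ) ^ 2 * (fourier 1 (z i) * fourier 1 (z j))) p volume
        < eLpNorm (fun z : d → AddCircle (1 : ℝ) =>
            1 + (ε : ℂ) * (fourier 1 (z i) + fourier 1 (z j))) p volume := by
  have hmem : ∀ {f : UnitAddTorus d → ℂ}, Continuous f → MemLp f p volume := fun hf ↦
    hf.memLp_of_hasCompactSupport (.of_compactSpace _)
  obtain ⟨ε₀, hε₀, hlt⟩ := mem_nhdsGT_iff_exists_Ioo_subset.1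
    (eventually_integral_norm_rpow_lt hij (ENNReal.toReal_pos hp0 hptop).ne' hc)
  exact ⟨ε₀, hε₀, fun ε hε hε' ↦ eLpNorm_lt_eLpNorm_of_integral_norm_rpow_lt hp0 hptop
    (hmem (by fun_prop)) (hmem (by fun_prop)) (hlt ⟨hε, hε'⟩)⟩

end

/-- Lemma 2.4, first part: for `1 ≤ p < ∞`, `p ≠ 2` and `c_p = 1 - p/2`, one has
`‖1 + ε(z₁+z₂) + c_p ε² z₁z₂‖_p < ‖1 + ε(z₁+z₂)‖_p` for all sufficiently small `ε > 0`. -/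
theorem plane_lemma (p : ℝ≥0∞) (hp1 : 1 ≤ p) (hptop : p ≠ ∞) (hp2 : p ≠ 2) :
    ∃ ε₀ : ℝ, 0 < ε₀ ∧ ∀ ε : ℝ, 0 < ε → ε < ε₀ →
      eLpNorm (fun z : Fin 2 → AddCircle (1 : ℝ) =>
          1 + (ε : ℂ) * (fourier 1 (z 0) + fourier 1 (z 1))
            + ((1 - p.toReal / 2 : ℝ) : ℂ) * (ε : ℂ) ^ 2
              * (fourier 1 (z 0) * fourier 1 (z 1))) p volume
        < eLpNorm (fun z : Fin 2 → AddCircle (1 : ℝ) =>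
            1 + (ε : ℂ) * (fourier 1 (z 0) + fourier 1 (z 1))) p volume := by
  have hp : p.toReal ≠ 2 := mt (ENNReal.toReal_eq_toReal_iff' hptop ENNReal.ofNat_ne_top).1 hp2
  exact plane_lemma_general zero_ne_one (one_pos.trans_le hp1).ne' hptop
    (norm_sq_one_sub_half_lt hp)

end
end

section
/- For the supremum norms over (z₁, z₂) ∈ 𝕋² one has ‖1 + z₁ + z₂ − z₁z₂‖_∞ = 2√2, and in particular ‖1 + z₁ + z₂ − z₁z₂‖_∞ < ‖1 + z₁ + z₂‖_∞ = 3. -/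
noncomputable section

/-!
Grouping `1 + z₁ + z₂ - z₁z₂ = (1 + z₁) + z₂ (1 - z₁)` bounds its modulus by `‖1 + z₁‖ + ‖1 - z₁‖`.
The squares of these two terms sum to `4` by the parallelogram law, so Cauchy-Schwarz bounds their
sum by `2√2`. Equality requires `‖1 + z₁‖ = ‖1 - z₁‖`, that is `z₁ = ±i`, and then fixes `z₂`.
-/

theorem norm_add_add_norm_sub_le_two_mul_sqrt (𝕜 : Type*) {E : Type*} [RCLike 𝕜]
    [SeminormedAddCommGroup E] [InnerProductSpace 𝕜 E] (x y : E) :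
    ‖x + y‖ + ‖x - y‖ ≤ 2 * √(‖x‖ ^ 2 + ‖y‖ ^ 2) := by
  have parallelogram : ‖x + y‖ ^ 2 + ‖x - y‖ ^ 2 = 2 * (‖x‖ ^ 2 + ‖y‖ ^ 2) := by
    simpa only [sq] using parallelogram_law_with_norm 𝕜 x y
  refine le_of_pow_le_pow_left₀ two_ne_zero (by positivity) ?_
  calc (‖x + y‖ + ‖x - y‖) ^ 2
      ≤ 2 * (‖x + y‖ ^ 2 + ‖x - y‖ ^ 2) := add_sq_le
    _ = 2 ^ 2 * (‖x‖ ^ 2 + ‖y‖ ^ 2) := by rw [parallelogram]; ring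
    _ = (2 * √(‖x‖ ^ 2 + ‖y‖ ^ 2)) ^ 2 := by rw [mul_pow, Real.sq_sqrt (by positivity)]

theorem norm_add_add_smul_sub_le_two_mul_sqrt {𝕜 E : Type*} [RCLike 𝕜]
    [SeminormedAddCommGroup E] [InnerProductSpace 𝕜 E] (x y : E) {c : 𝕜} (hc : ‖c‖ ≤ 1) :
    ‖x + y + c • (x - y)‖ ≤ 2 * √(‖x‖ ^ 2 + ‖y‖ ^ 2) :=
  calc ‖x + y + c • (x - y)‖
      ≤ ‖x + y‖ + ‖c • (x - y)‖ := norm_add_le _ _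
    _ ≤ ‖x + y‖ + ‖x - y‖ := by
      rw [norm_smul]
      gcongr
      exact mul_le_of_le_one_left (norm_nonneg _) hc
    _ ≤ 2 * √(‖x‖ ^ 2 + ‖y‖ ^ 2) := norm_add_add_norm_sub_le_two_mul_sqrt 𝕜 x y

theorem norm_one_add_add_sub_mul_le {𝕜 : Type*} [RCLike 𝕜] {z₁ z₂ : 𝕜}
    (hz₁ : ‖z₁‖ ≤ 1) (hz₂ : ‖z₂‖ ≤ 1) : ‖1 + z₁ + z₂ - z₁ * z₂‖ ≤ 2 * √2 :=
  calc ‖1 + z₁ + z₂ - z₁ * z₂‖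
      = ‖1 + z₁ + z₂ • (1 - z₁)‖ := by rw [smul_eq_mul]; ring_nf
    _ ≤ 2 * √(‖(1 : 𝕜)‖ ^ 2 + ‖z₁‖ ^ 2) := norm_add_add_smul_sub_le_two_mul_sqrt 1 z₁ hz₂
    _ ≤ 2 * √(1 ^ 2 + 1 ^ 2) := by rw [norm_one]; gcongr
    _ = 2 * √2 := by norm_num

theorem norm_one_add_I_add_I_sub_I_mul_I :
    ‖1 + Complex.I + Complex.I - Complex.I * Complex.I‖ = 2 * √2 := by
  have norm_one_add_I : ‖1 + Complex.I‖ = √2 := by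
    simpa [one_add_one_eq_two] using Complex.norm_add_mul_I 1 1
  calc ‖1 + Complex.I + Complex.I - Complex.I * Complex.I‖
      = ‖2 * (1 + Complex.I)‖ := by rw [Complex.I_mul_I]; ring_nf
    _ = 2 * √2 := by rw [norm_mul, Complex.norm_two, norm_one_add_I]

theorem isGreatest_norm_one_add_add_sub_mul :
    IsGreatest {r : ℝ | ∃ z₁ z₂ : ℂ, ‖z₁‖ = 1 ∧ ‖z₂‖ = 1 ∧ r = ‖1 + z₁ + z₂ - z₁ * z₂‖}
      (2 * √2) := by
  constructor
  · exact ⟨Complex.I, Complex.I, Complex.norm_I, Complex.norm_I,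
      norm_one_add_I_add_I_sub_I_mul_I.symm⟩
  · rintro _ ⟨z₁, z₂, hz₁, hz₂, rfl⟩
    exact norm_one_add_add_sub_mul_le hz₁.le hz₂.le

theorem isGreatest_norm_one_add_add {𝕜 : Type*} [RCLike 𝕜] :
    IsGreatest {r : ℝ | ∃ z₁ z₂ : 𝕜, ‖z₁‖ = 1 ∧ ‖z₂‖ = 1 ∧ r = ‖1 + z₁ + z₂‖} 3 := by
  constructor
  · refine ⟨1, 1, norm_one, norm_one, ?_⟩
    calc (3 : ℝ) = ‖(3 : 𝕜)‖ := (RCLike.norm_ofNat 3).symm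
      _ = ‖(1 : 𝕜) + 1 + 1‖ := by norm_num
  · rintro _ ⟨z₁, z₂, hz₁, hz₂, rfl⟩
    calc ‖1 + z₁ + z₂‖ ≤ ‖(1 : 𝕜)‖ + ‖z₁‖ + ‖z₂‖ := norm_add₃_le
      _ = 3 := by rw [norm_one, hz₁, hz₂]; norm_num

/-- Lemma 2.4, second part: the sup norms over the two-dimensional torus satisfy
`‖1 + z₁ + z₂ - z₁z₂‖_∞ = 2√2 < 3 = ‖1 + z₁ + z₂‖_∞`. -/
theorem sup_norm_corner :
    sSup {r : ℝ | ∃ z₁ z₂ : ℂ, ‖z₁‖ = 1 ∧ ‖z₂‖ = 1 ∧ r = ‖1 + z₁ + z₂ - z₁ * z₂‖}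
        = 2 * Real.sqrt 2 ∧
    sSup {r : ℝ | ∃ z₁ z₂ : ℂ, ‖z₁‖ = 1 ∧ ‖z₂‖ = 1 ∧ r = ‖1 + z₁ + z₂‖} = 3 ∧
    2 * Real.sqrt 2 < 3 := by
  exact ⟨isGreatest_norm_one_add_add_sub_mul.csSup_eq, isGreatest_norm_one_add_add.csSup_eq,
    (lt_div_iff₀' two_pos).1 Real.sqrt_two_lt_three_halves⟩

end
end

section
/- Let d ≥ 1 be an integer and fix any α ∈ ℤ^d. Then there exists ε₀ > 0 such that for every 0 < ε < ε₀ one has the strict inequality ‖d + ∑_{j=1}^d z_j − ε z^α‖_∞ < ‖d + ∑_{j=1}^d z_j‖_∞, where the norms are supremum norms over z ∈ 𝕋^d (and the right-hand side equals 2d). -/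
noncomputable section

/-!
On the torus, `‖d + ∑ z_j‖` attains its maximum `2d` only at `z = (1, …, 1)`, by strict convexity
of `ℂ`. There the perturbation `z^α` equals `1`, which points in the direction of `2d`, so
subtracting `ε z^α` decreases the norm to first order near the maximum point. Away from it the norm
stays below `2d` by continuity, and compactness makes the choice of `ε` uniform.
-/

open Filter Topology

section Perturbation

variable {X E : Type*} [SeminormedAddCommGroup E] [InnerProductSpace ℝ E] {f g : X → E} {M : ℝ}

theorem norm_sub_smul_lt_norm_of_lt_inner {a b : E} {ε : ℝ} (hε : 0 < ε)
    (h : ε * ‖b‖ ^ 2 < 2 * inner ℝ a b) : ‖a - ε • b‖ < ‖a‖ := by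
  refine lt_of_pow_lt_pow_left₀ 2 (norm_nonneg a) ?_
  calc ‖a - ε • b‖ ^ 2
      = ‖a‖ ^ 2 - ε * (2 * inner ℝ a b - ε * ‖b‖ ^ 2) := by
        rw [norm_sub_sq_real, real_inner_smul_right, norm_smul, Real.norm_of_nonneg hε.le]
        ring
    _ < ‖a‖ ^ 2 := sub_lt_self _ (mul_pos hε (sub_pos.2 h))

theorem eventually_norm_sub_smul_lt {l : Filter X} {a b : E} (hf : Tendsto f l (𝓝 a))
    (hg : Tendsto g l (𝓝 b)) (hM : ∀ᶠ x in l, ‖f x‖ ≤ M) (hab : ‖a‖ < M ∨ 0 < inner ℝ a b) :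
    ∀ᶠ p : X × ℝ in l ×ˢ 𝓝[>] 0, ‖f p.1 - p.2 • g p.1‖ < M := by
  have hf' : Tendsto (fun p : X × ℝ => f p.1) (l ×ˢ 𝓝[>] 0) (𝓝 a) := hf.comp tendsto_fst
  have hg' : Tendsto (fun p : X × ℝ => g p.1) (l ×ˢ 𝓝[>] 0) (𝓝 b) := hg.comp tendsto_fst
  have hε : Tendsto (fun p : X × ℝ => p.2) (l ×ˢ 𝓝[>] 0) (𝓝 0) :=
    tendsto_nhds_of_tendsto_nhdsWithin tendsto_snd
  rcases hab with ha | hab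
  · have hlim := (hf'.sub (hε.smul hg')).norm
    rw [zero_smul, sub_zero] at hlim
    exact hlim.eventually_lt_const ha
  · have hdecrease : ∀ᶠ p : X × ℝ in l ×ˢ 𝓝[>] 0,
        p.2 * ‖g p.1‖ ^ 2 < 2 * inner ℝ (f p.1) (g p.1) :=
      (hε.mul (hg'.norm.pow 2)).eventually_lt ((hf'.inner hg').const_mul 2) (by linarith)
    filter_upwards [hdecrease, tendsto_fst.eventually hM,
      tendsto_snd.eventually self_mem_nhdsWithin] with p hp hpM hpos
    exact (norm_sub_smul_lt_norm_of_lt_inner hpos hp).trans_le hpM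

theorem eventually_forall_mem_norm_sub_smul_lt [TopologicalSpace X] {K : Set X}
    (hK : IsCompact K) (hf : ContinuousOn f K) (hg : ContinuousOn g K) (hM : ∀ x ∈ K, ‖f x‖ ≤ M)
    (hpos : ∀ x ∈ K, ‖f x‖ = M → 0 < inner ℝ (f x) (g x)) :
    ∀ᶠ ε : ℝ in 𝓝[>] 0, ∀ x ∈ K, ‖f x - ε • g x‖ < M := by
  refine hK.induction_on (p := fun s => ∀ᶠ ε : ℝ in 𝓝[>] 0, ∀ x ∈ s, ‖f x - ε • g x‖ < M)
    (by simp) (fun s t hst ht => ht.mono fun ε h x hx => h x (hst hx))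
    (fun s t hs ht => ?_) (fun x hx => ?_)
  · filter_upwards [hs, ht] with ε hsε htε x hx
    exact hx.elim (hsε x) (htε x)
  · obtain ⟨U, hU, V, hV, hUV⟩ := eventually_prod_iff.1 <|
      eventually_norm_sub_smul_lt (hf x hx) (hg x hx) (eventually_mem_nhdsWithin.mono hM)
        ((hM x hx).lt_or_eq.imp_right (hpos x hx))
    exact ⟨{y | U y}, hU, hV.mono fun ε hε y hy => hUV hy hε⟩

end Perturbation

section CardNSMulAddSum

variable {ι E : Type*} {s : Finset ι} {x : E} {z : ι → E}

theorem norm_card_nsmul_add_sum_le [SeminormedAddCommGroup E] (hz : ∀ i ∈ s, ‖z i‖ ≤ ‖x‖) :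
    ‖s.card • x + ∑ i ∈ s, z i‖ ≤ 2 * s.card * ‖x‖ := by
  have hsum : ‖∑ i ∈ s, z i‖ ≤ s.card * ‖x‖ := by
    simpa only [nsmul_eq_mul] using norm_sum_le_of_le s hz |>.trans_eq (Finset.sum_const _)
  linarith [norm_add_le_of_le (norm_nsmul_le (n := s.card) (a := x)) hsum]

theorem eq_of_norm_card_nsmul_add_sum_eq [NormedAddCommGroup E] [NormedSpace ℝ E]
    [StrictConvexSpace ℝ E] (hz : ∀ i ∈ s, ‖z i‖ ≤ ‖x‖)
    (h : ‖s.card • x + ∑ i ∈ s, z i‖ = 2 * s.card * ‖x‖) : ∀ i ∈ s, z i = x := by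
  have hle : ∀ i ∈ s, ‖x + z i‖ ≤ ‖x‖ + ‖x‖ := fun i hi => norm_add_le_of_le le_rfl (hz i hi)
  have hsum : ∑ _i ∈ s, (‖x‖ + ‖x‖) ≤ ∑ i ∈ s, ‖x + z i‖ :=
    calc ∑ _i ∈ s, (‖x‖ + ‖x‖)
        = 2 * s.card * ‖x‖ := by rw [Finset.sum_const, nsmul_eq_mul]; ring
      _ = ‖∑ i ∈ s, (x + z i)‖ := by rw [← h, Finset.sum_add_distrib, Finset.sum_const]
      _ ≤ ∑ i ∈ s, ‖x + z i‖ := norm_sum_le _ _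
  intro i hi
  have hadd : ‖x + z i‖ = ‖x‖ + ‖x‖ :=
    (Finset.sum_eq_sum_iff_of_le hle).1 (le_antisymm (Finset.sum_le_sum hle) hsum) i hi
  have hnorm : ‖z i‖ = ‖x‖ := le_antisymm (hz i hi) (by linarith [norm_add_le x (z i)])
  exact (eq_of_norm_eq_of_norm_add_eq hnorm.symm (by rw [hadd, hnorm])).symm

end CardNSMulAddSum

/-- The torus `𝕋^ι` as a subset of `ℂ^ι`, so that functions on it are restrictions of functions of
complex variables. -/
def unitTorus (ι : Type*) : Set (ι → ℂ) := {z | ∀ j, ‖z j‖ = 1}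

/-- The supremum norm of `g` over the torus `𝕋^ι`; it is `0` by convention when `g` is unbounded
there. -/
def torusSupNorm {ι : Type*} (g : (ι → ℂ) → ℂ) : ℝ := sSup {r | ∃ z ∈ unitTorus ι, r = ‖g z‖}

section Torus

variable {ι : Type*}

theorem one_mem_unitTorus : (1 : ι → ℂ) ∈ unitTorus ι := fun _ => norm_one

theorem isCompact_unitTorus : IsCompact (unitTorus ι) := by
  have h : unitTorus ι = Set.univ.pi fun _ => Metric.sphere 0 1 := by
    ext z
    simp only [unitTorus, Set.mem_ofPred_eq, Set.mem_univ_pi, mem_sphere_zero_iff_norm]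
  rw [h]
  exact isCompact_univ_pi fun _ => isCompact_sphere 0 1

theorem torusSupNorm_lt_iff {g : (ι → ℂ) → ℂ} (hg : ContinuousOn g (unitTorus ι)) {M : ℝ} :
    torusSupNorm g < M ↔ ∀ z ∈ unitTorus ι, ‖g z‖ < M := by
  have himage : {r | ∃ z ∈ unitTorus ι, r = ‖g z‖} = (fun z => ‖g z‖) '' unitTorus ι := by
    simp only [Set.image, eq_comm]
  rw [torusSupNorm, himage]
  exact isCompact_unitTorus.sSup_lt_iff_of_continuous ⟨1, one_mem_unitTorus⟩ hg.norm M

variable [Fintype ι]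

theorem continuousOn_prod_zpow_unitTorus (α : ι → ℤ) :
    ContinuousOn (fun z : ι → ℂ => ∏ j, z j ^ α j) (unitTorus ι) :=
  continuousOn_finsetProd _ fun j _ => (continuous_apply j).continuousOn.zpow₀ _ fun z hz =>
    Or.inl (norm_ne_zero_iff.1 (by simp [hz j]))

theorem norm_card_add_sum_le {z : ι → ℂ} (hz : z ∈ unitTorus ι) :
    ‖(Fintype.card ι : ℂ) + ∑ j, z j‖ ≤ 2 * Fintype.card ι := by
  simpa using norm_card_nsmul_add_sum_le (s := .univ) (x := (1 : ℂ)) fun j _ => by simp [hz j]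

theorem eq_one_of_norm_card_add_sum_eq {z : ι → ℂ} (hz : z ∈ unitTorus ι)
    (h : ‖(Fintype.card ι : ℂ) + ∑ j, z j‖ = 2 * Fintype.card ι) : z = 1 :=
  funext fun j => eq_of_norm_card_nsmul_add_sum_eq (s := .univ) (x := (1 : ℂ))
    (fun i _ => by simp [hz i]) (by simpa using h) j (Finset.mem_univ j)

theorem torusSupNorm_card_add_sum :
    torusSupNorm (fun z : ι → ℂ => Fintype.card ι + ∑ j, z j) = 2 * Fintype.card ι := by
  refine IsGreatest.csSup_eq ⟨⟨1, one_mem_unitTorus, ?_⟩, ?_⟩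
  · simp [← two_mul]
  · rintro r ⟨z, hz, rfl⟩
    exact norm_card_add_sum_le hz

theorem sup_norm_cone_lemma_general [Nonempty ι] {g : (ι → ℂ) → ℂ}
    (hg : ContinuousOn g (unitTorus ι)) (hg_one : 0 < (g 1).re) :
    torusSupNorm (fun z : ι → ℂ => Fintype.card ι + ∑ j, z j) = 2 * Fintype.card ι ∧
    ∃ ε₀ : ℝ, 0 < ε₀ ∧ ∀ ε : ℝ, 0 < ε → ε < ε₀ →
      torusSupNorm (fun z => Fintype.card ι + ∑ j, z j - ε * g z)
        < torusSupNorm (fun z : ι → ℂ => Fintype.card ι + ∑ j, z j) := by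
  refine ⟨torusSupNorm_card_add_sum, ?_⟩
  rw [torusSupNorm_card_add_sum]
  have hf : ContinuousOn (fun z : ι → ℂ => (Fintype.card ι : ℂ) + ∑ j, z j) (unitTorus ι) := by
    fun_prop
  have hpos : ∀ z ∈ unitTorus ι, ‖(Fintype.card ι : ℂ) + ∑ j, z j‖ = 2 * Fintype.card ι →
      0 < inner ℝ ((Fintype.card ι : ℂ) + ∑ j, z j) (g z) := by
    intro z hz hmax
    obtain rfl := eq_one_of_norm_card_add_sum_eq hz hmax
    have hcard : (0 : ℝ) < Fintype.card ι := Nat.cast_pos.2 Fintype.card_pos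
    simpa [Complex.inner, ← two_mul, hcard] using hg_one
  obtain ⟨ε₀, hε₀, h⟩ := mem_nhdsGT_iff_exists_Ioo_subset.1 <|
    eventually_forall_mem_norm_sub_smul_lt isCompact_unitTorus hf hg
      (fun _ => norm_card_add_sum_le) hpos
  refine ⟨ε₀, hε₀, fun ε hε hlt => (torusSupNorm_lt_iff (by fun_prop)).2 ?_⟩
  simpa only [Complex.real_smul, Set.mem_ofPred_eq] using h ⟨hε, hlt⟩

end Torus

/-- Lemma 2.7: for any `α ∈ ℤ^d`, the sup norms over the torus satisfy
`‖d + ∑ z_j - ε z^α‖_∞ < ‖d + ∑ z_j‖_∞ = 2d` for all sufficiently small `ε > 0`. -/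
theorem sup_norm_cone_lemma (d : ℕ) (hd : 1 ≤ d) (α : Fin d → ℤ) :
    sSup {r : ℝ | ∃ z : Fin d → ℂ, (∀ j, ‖z j‖ = 1) ∧ r = ‖(d : ℂ) + ∑ j, z j‖}
        = 2 * d ∧
    ∃ ε₀ : ℝ, 0 < ε₀ ∧ ∀ ε : ℝ, 0 < ε → ε < ε₀ →
      sSup {r : ℝ | ∃ z : Fin d → ℂ, (∀ j, ‖z j‖ = 1) ∧
          r = ‖(d : ℂ) + ∑ j, z j - (ε : ℂ) * ∏ j, z j ^ α j‖}
        < sSup {r : ℝ | ∃ z : Fin d → ℂ, (∀ j, ‖z j‖ = 1) ∧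
            r = ‖(d : ℂ) + ∑ j, z j‖} := by
  have : Nonempty (Fin d) := Fin.pos_iff_nonempty.1 hd
  simpa only [torusSupNorm, unitTorus, Set.mem_ofPred_eq, Fintype.card_fin] using
    sup_norm_cone_lemma_general (continuousOn_prod_zpow_unitTorus α) (by simp)

end
end

section
/- Fix 1 ≤ p < ∞ and an integer d ≥ 1. A nonempty subset Γ of ℕ_0^d is a contractive projection set for H^p(𝕋^d) if and only if ∫_{𝕋^d} |f(z)|^{p−2} f(z) · conj(z^λ) dm_d(z) = 0 for every analytic polynomial f(z) = ∑_{γ ∈ Γ₀} a_γ z^γ with Γ₀ a finite subset of Γ, and every λ ∈ (Λ(Γ) ∩ ℕ_0^d) ∖ Γ. (Here the integrand is interpreted as 0 at the points where f vanishes.) -/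
open MeasureTheory
open scoped Classical ENNReal

noncomputable section

/-- The `d`-dimensional torus, modelled as `d` copies of `ℝ/ℤ`,
whose product `volume` measure is the normalized Haar measure. -/
abbrev Torus (d : ℕ) := Fin d → AddCircle (1 : ℝ)

/-- The character `z ↦ z^α` on the torus. -/
def torusChar {d : ℕ} (α : Fin d → ℤ) (x : Torus d) : ℂ :=
  ∏ j, fourier (α j) (x j)

/-- The trigonometric polynomial with frequencies in `F` and coefficients `a`. -/
def trigPoly {d : ℕ} (F : Finset (Fin d → ℤ)) (a : (Fin d → ℤ) → ℂ) (x : Torus d) : ℂ :=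
  ∑ α ∈ F, a α * torusChar α x

/-- The set `ℕ₀^d` of multi-indices with nonnegative entries. -/
def NN (d : ℕ) : Set (Fin d → ℤ) := {α | ∀ j, 0 ≤ α j}

/-- `Λ` is a coset in `ℤ^d`, i.e. a translate of a subgroup. -/
def IsCoset {d : ℕ} (Λ : Set (Fin d → ℤ)) : Prop :=
  ∃ (x : Fin d → ℤ) (H : AddSubgroup (Fin d → ℤ)),
    Λ = (x + ·) '' (H : Set (Fin d → ℤ))

/-- `Λ` is a contractive projection set for `L^p(𝕋^d)`:
the projection onto frequencies in `Λ` is contractive on trigonometric polynomials. -/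
def IsContractiveLp (d : ℕ) (p : ℝ≥0∞) (Λ : Set (Fin d → ℤ)) : Prop :=
  ∀ (F : Finset (Fin d → ℤ)) (a : (Fin d → ℤ) → ℂ),
    eLpNorm (trigPoly (F.filter (· ∈ Λ)) a) p volume ≤ eLpNorm (trigPoly F a) p volume

/-- `Γ` is a contractive projection set for `H^p(𝕋^d)`:
the projection onto frequencies in `Γ` is contractive on analytic polynomials. -/
def IsContractiveHp (d : ℕ) (p : ℝ≥0∞) (Γ : Set (Fin d → ℤ)) : Prop :=
  ∀ F : Finset (Fin d → ℤ), ↑F ⊆ NN d → ∀ a : (Fin d → ℤ) → ℂ,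
    eLpNorm (trigPoly (F.filter (· ∈ Γ)) a) p volume ≤ eLpNorm (trigPoly F a) p volume

/-- `Γ` has dimension `k`: the subgroup generated by the differences `γ - γ₀` has rank `k`. -/
def HasDim {d : ℕ} (Γ : Set (Fin d → ℤ)) (k : ℕ) : Prop :=
  ∀ γ₀ ∈ Γ, Module.finrank ℤ (Submodule.span ℤ ((· - γ₀) '' Γ)) = k

/-- `H^p(𝕋^d)` enjoys the contractive restriction property of dimension `k`:
every `k`-dimensional contractive projection set for `H^p(𝕋^d)` is the restriction
of a coset in `ℤ^d` to `ℕ₀^d`. -/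
def ContractiveRestrictionProperty (d : ℕ) (p : ℝ≥0∞) (k : ℕ) : Prop :=
  ∀ Γ : Set (Fin d → ℤ), Γ.Nonempty → Γ ⊆ NN d → HasDim Γ k → IsContractiveHp d p Γ →
    ∃ Λ : Set (Fin d → ℤ), IsCoset Λ ∧ Γ = Λ ∩ NN d

/-- The coset `Λ(Γ)` in `ℤ^d` generated by `Γ`. -/
def cosetGen {d : ℕ} (Γ : Set (Fin d → ℤ)) : Set (Fin d → ℤ) :=
  ⋃ γ₀ ∈ Γ, (γ₀ + ·) '' (AddSubgroup.closure ((· - γ₀) '' Γ) : Set (Fin d → ℤ))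

/-- The `n`-extension `E_n(Γ)`: all points of `Λ(Γ) ∩ ℕ₀^d` at distance at most `n` from `Γ`. -/
def Eext {d : ℕ} (n : ℕ) (Γ : Set (Fin d → ℤ)) : Set (Fin d → ℤ) :=
  {lam | lam ∈ cosetGen Γ ∩ NN d ∧ ∃ γ ∈ Γ, ∃ m : (Fin d → ℤ) →₀ ℤ,
    (↑m.support : Set (Fin d → ℤ)) ⊆ Γ \ {γ} ∧
    lam = γ + ∑ α ∈ m.support, m α • (α - γ) ∧
    (∑ α ∈ m.support, max (m α) 0) ≤ (n : ℤ) ∧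
    (∑ α ∈ m.support, max (-(m α)) 0) ≤ (n : ℤ)}

/-- Iterated `n`-extensions `E_n^k(Γ)`. -/
def EextIter {d : ℕ} (n : ℕ) : ℕ → Set (Fin d → ℤ) → Set (Fin d → ℤ)
  | 0, Γ => Eext n Γ
  | (k + 1), Γ => Eext n (EextIter n k Γ)

/-- The `n`-completion `E_n^∞(Γ)`. -/
def EextInf {d : ℕ} (n : ℕ) (Γ : Set (Fin d → ℤ)) : Set (Fin d → ℤ) :=
  ⋃ k, EextIter n k Γ

/-!
Write `J v = |v|^{p-2} v`. In `L^p` one has `‖f‖ ≤ ‖f + t g‖` for all real `t` if and only if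
`∫ Re (J f · conj g) = 0`: the tangent inequality of the convex function `|·|^p` gives one
direction. The other one differentiates `t ↦ ∫ |f + t g|^p` at its minimum `t = 0`; for `p = 1` this
needs `f ≠ 0` almost everywhere, which holds for a nonzero trigonometric polynomial.

Applied to `f` with frequencies in `Γ` and to combinations `g` of characters `z^λ` with `λ ∉ Γ`,
this turns contractivity of the projection into `∫ J f · conj z^λ = 0`. If `λ ∉ Λ(Γ)`, this integral
vanishes for every `f`: a translation of the torus that multiplies all `z^γ`, `γ ∈ Γ`, by the same
unimodular constant multiplies `z^λ` by a different one.
-/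

open Set Filter Topology
open scoped Pointwise InnerProductSpace

section DualityMap

variable {E : Type*} [NormedAddCommGroup E]

/-- The duality map `v ↦ |v|^{r-2} v`, which is `1 / r` times the gradient of `v ↦ |v|^r`.
It vanishes at `0` for every `r`, whatever the value of `‖0‖ ^ (r - 2)`, so no case distinction at
the zeros is needed. -/
def dualityMap [NormedSpace ℝ E] (r : ℝ) (v : E) : E := ‖v‖ ^ (r - 2) • v

@[simp]
lemma dualityMap_zero [NormedSpace ℝ E] (r : ℝ) : dualityMap r (0 : E) = 0 := smul_zero _

lemma dualityMap_smul_of_norm_eq_one {𝕜 : Type*} [NormedField 𝕜] [NormedSpace 𝕜 E]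
    [NormedSpace ℝ E] [SMulCommClass ℝ 𝕜 E] (r : ℝ) {c : 𝕜} (hc : ‖c‖ = 1) (v : E) :
    dualityMap r (c • v) = c • dualityMap r v := by
  rw [dualityMap, dualityMap, norm_smul, hc, one_mul, smul_comm]

lemma norm_dualityMap_le [NormedSpace ℝ E] (r : ℝ) (v : E) : ‖dualityMap r v‖ ≤ ‖v‖ ^ (r - 1) := by
  obtain rfl | hv := eq_or_ne v 0
  · simpa using by positivity
  · rw [dualityMap, norm_smul, Real.norm_of_nonneg (by positivity),
      ← Real.rpow_add_one (norm_ne_zero_iff.mpr hv)]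
    exact (congrArg _ (by ring)).le

variable [InnerProductSpace ℝ E] {r : ℝ}

lemma inner_dualityMap_self (hr : r ≠ 0) (v : E) : ⟪dualityMap r v, v⟫_ℝ = ‖v‖ ^ r := by
  obtain rfl | hv := eq_or_ne v 0
  · simp [Real.zero_rpow hr]
  · rw [dualityMap, real_inner_smul_left, real_inner_self_eq_norm_sq, ← Real.rpow_natCast,
      ← Real.rpow_add (norm_pos_iff.mpr hv)]
    congr 1
    push_cast
    ring

lemma inner_dualityMap_le (r : ℝ) (u v : E) : ⟪dualityMap r v, u⟫_ℝ ≤ ‖v‖ ^ (r - 1) * ‖u‖ :=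
  (real_inner_le_norm _ _).trans <| by gcongr; exact norm_dualityMap_le r v

lemma rpow_norm_add_inner_dualityMap_le (hr : 1 ≤ r) (u v : E) :
    ‖v‖ ^ r + r * ⟪dualityMap r v, u - v⟫_ℝ ≤ ‖u‖ ^ r := by
  have hr0 : r ≠ 0 := by positivity
  rw [inner_sub_right, inner_dualityMap_self hr0]
  obtain rfl | hv := eq_or_ne v 0
  · simpa [Real.zero_rpow hr0] using by positivity
  have hv' : 0 < ‖v‖ := norm_pos_iff.mpr hv
  have bernoulli : 1 + r * (‖u‖ / ‖v‖ - 1) ≤ (‖u‖ / ‖v‖) ^ r := by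
    have h : -1 ≤ ‖u‖ / ‖v‖ - 1 := by linarith [show 0 ≤ ‖u‖ / ‖v‖ by positivity]
    simpa using one_add_mul_self_le_rpow_one_add h hr
  calc ‖v‖ ^ r + r * (⟪dualityMap r v, u⟫_ℝ - ‖v‖ ^ r)
      ≤ ‖v‖ ^ r + r * (‖v‖ ^ (r - 1) * ‖u‖ - ‖v‖ ^ r) := by
        gcongr
        exact inner_dualityMap_le r u v
    _ = ‖v‖ ^ r * (1 + r * (‖u‖ / ‖v‖ - 1)) := by
        rw [Real.rpow_sub_one hv'.ne']
        ring
    _ ≤ ‖v‖ ^ r * (‖u‖ / ‖v‖) ^ r := by gcongr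
    _ = ‖u‖ ^ r := by
        rw [← Real.mul_rpow hv'.le (by positivity), mul_div_cancel₀ _ hv'.ne']

lemma rpow_norm_sub_rpow_norm_le (hr : 1 ≤ r) {R : ℝ} {u v : E} (hv : ‖v‖ ≤ R) :
    ‖v‖ ^ r - ‖u‖ ^ r ≤ r * R ^ (r - 1) * ‖v - u‖ := by
  have htangent := rpow_norm_add_inner_dualityMap_le hr u v
  rw [← neg_sub v u, inner_neg_right] at htangent
  calc ‖v‖ ^ r - ‖u‖ ^ r ≤ r * ⟪dualityMap r v, v - u⟫_ℝ := by linarith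
    _ ≤ r * (‖v‖ ^ (r - 1) * ‖v - u‖) := by gcongr; exact inner_dualityMap_le r _ v
    _ ≤ r * R ^ (r - 1) * ‖v - u‖ := by rw [mul_assoc]; gcongr

lemma abs_rpow_norm_sub_rpow_norm_le (hr : 1 ≤ r) {R : ℝ} {u v : E} (hu : ‖u‖ ≤ R) (hv : ‖v‖ ≤ R) :
    |‖u‖ ^ r - ‖v‖ ^ r| ≤ r * R ^ (r - 1) * ‖u - v‖ :=
  abs_sub_le_iff.mpr ⟨rpow_norm_sub_rpow_norm_le hr hu,
    (rpow_norm_sub_rpow_norm_le hr hv).trans_eq (by rw [norm_sub_rev])⟩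

lemma hasDerivAt_rpow_norm_add_smul (r : ℝ) {v : E} (hv : v ≠ 0) (h : E) :
    HasDerivAt (fun t : ℝ ↦ ‖v + t • h‖ ^ r) (r * ⟪dualityMap r v, h⟫_ℝ) 0 := by
  have hline : HasDerivAt (fun t : ℝ ↦ v + t • h) h 0 := by
    simpa using ((hasDerivAt_id (0 : ℝ)).smul_const h).const_add v
  have hpow := hline.norm_sq.rpow_const (p := r / 2) (.inl (by simpa using hv))
  have hexp (x : E) (q : ℝ) : (‖x‖ ^ 2) ^ (q / 2) = ‖x‖ ^ q := by
    rw [← Real.rpow_natCast_mul (norm_nonneg x)]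
    congr 1
    push_cast
    ring
  have hexp' : r / 2 - 1 = (r - 2) / 2 := by ring
  simp only [hexp, hexp', zero_smul, add_zero] at hpow
  refine hpow.congr_deriv ?_
  rw [dualityMap, real_inner_smul_left]
  ring

end DualityMap

section LpDuality

variable {α : Type*} [MeasurableSpace α] {μ : Measure α} {p : ℝ≥0∞}
  {E : Type*} [NormedAddCommGroup E]

lemma eLpNorm_le_eLpNorm_iff_integral_rpow_norm_le {F : Type*} [NormedAddCommGroup F]
    {f : α → E} {g : α → F} (hp0 : p ≠ 0) (hp : p ≠ ∞) (hf : MemLp f p μ) (hg : MemLp g p μ) :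
    eLpNorm f p μ ≤ eLpNorm g p μ ↔ ∫ x, ‖f x‖ ^ p.toReal ∂μ ≤ ∫ x, ‖g x‖ ^ p.toReal ∂μ := by
  have hr : 0 < p.toReal := ENNReal.toReal_pos hp0 hp
  rw [hf.eLpNorm_eq_integral_rpow_norm hp0 hp, hg.eLpNorm_eq_integral_rpow_norm hp0 hp,
    ENNReal.ofReal_le_ofReal_iff (by positivity),
    Real.rpow_le_rpow_iff (by positivity) (by positivity) (by positivity)]

lemma rpow_sub_one_mul_le_rpow_add_rpow {r a b : ℝ} (hr : 1 ≤ r) (ha : 0 ≤ a) (hb : 0 ≤ b) :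
    a ^ (r - 1) * b ≤ a ^ r + b ^ r := by
  have hmul (c : ℝ) (hc : 0 ≤ c) : c ^ (r - 1) * c = c ^ r := by
    rw [← Real.rpow_add_one' hc (by linarith), sub_add_cancel]
  obtain hab | hba := le_total a b
  · calc a ^ (r - 1) * b ≤ b ^ (r - 1) * b := by gcongr
      _ ≤ a ^ r + b ^ r := by rw [hmul b hb]; linarith [Real.rpow_nonneg ha r]
  · calc a ^ (r - 1) * b ≤ a ^ (r - 1) * a := by gcongr
      _ ≤ a ^ r + b ^ r := by rw [hmul a ha]; linarith [Real.rpow_nonneg hb r]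

lemma integrable_rpow_norm_mul_norm {F : Type*} [NormedAddCommGroup F] {f : α → E} {g : α → F}
    (hp1 : 1 ≤ p) (hp : p ≠ ∞) (hf : MemLp f p μ) (hg : MemLp g p μ) :
    Integrable (fun x ↦ ‖f x‖ ^ (p.toReal - 1) * ‖g x‖) μ := by
  have hp0 : p ≠ 0 := (zero_lt_one.trans_le hp1).ne'
  have hr : 1 ≤ p.toReal := by simpa using ENNReal.toReal_mono hp hp1
  refine ((hf.integrable_norm_rpow hp0 hp).add (hg.integrable_norm_rpow hp0 hp)).mono'
    ((hf.1.norm.aemeasurable.pow_const _).mul hg.1.norm.aemeasurable).aestronglyMeasurable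
    (.of_forall fun x ↦ ?_)
  rw [Real.norm_of_nonneg (by positivity)]
  exact rpow_sub_one_mul_le_rpow_add_rpow hr (norm_nonneg _) (norm_nonneg _)

lemma aestronglyMeasurable_dualityMap_comp [NormedSpace ℝ E] {f : α → E} (r : ℝ)
    (hf : AEStronglyMeasurable f μ) : AEStronglyMeasurable (fun x ↦ dualityMap r (f x)) μ :=
  (hf.norm.aemeasurable.pow_const _).aestronglyMeasurable.smul hf

variable [InnerProductSpace ℝ E] {f g : α → E}

lemma integrable_inner_dualityMap (hp1 : 1 ≤ p) (hp : p ≠ ∞) (hf : MemLp f p μ)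
    (hg : MemLp g p μ) : Integrable (fun x ↦ ⟪dualityMap p.toReal (f x), g x⟫_ℝ) μ := by
  refine (integrable_rpow_norm_mul_norm hp1 hp hf hg).mono'
    ((aestronglyMeasurable_dualityMap_comp _ hf.1).inner hg.1) (.of_forall fun x ↦ ?_)
  refine (norm_inner_le_norm _ _).trans ?_
  gcongr
  exact norm_dualityMap_le _ _

lemma hasDerivAt_integral_rpow_norm_add_smul (hp1 : 1 ≤ p) (hp : p ≠ ∞) (hf : MemLp f p μ)
    (hg : MemLp g p μ) (hf0 : ∀ᵐ x ∂μ, f x ≠ 0) :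
    HasDerivAt (fun t : ℝ ↦ ∫ x, ‖f x + t • g x‖ ^ p.toReal ∂μ)
      (p.toReal * ∫ x, ⟪dualityMap p.toReal (f x), g x⟫_ℝ ∂μ) 0 := by
  have hr : 1 ≤ p.toReal := by simpa using ENNReal.toReal_mono hp hp1
  have hmem (t : ℝ) : MemLp (fun x ↦ f x + t • g x) p μ := hf.add (hg.const_smul t)
  have hint (t : ℝ) : Integrable (fun x ↦ ‖f x + t • g x‖ ^ p.toReal) μ :=
    (hmem t).integrable_norm_rpow (by positivity) hp
  let R (x : α) : ℝ := ‖f x‖ + ‖g x‖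
  have hR : Integrable (fun x ↦ p.toReal * (‖R x‖ ^ (p.toReal - 1) * ‖g x‖)) μ :=
    (integrable_rpow_norm_mul_norm hp1 hp (hf.norm.add hg.norm) hg).const_mul _
  have hline {t : ℝ} (ht : t ∈ Metric.closedBall (0 : ℝ) 1) (x : α) :
      ‖f x + t • g x‖ ≤ ‖R x‖ := by
    rw [Real.norm_of_nonneg (by positivity)]
    refine (norm_add_le _ _).trans (add_le_add_right ?_ _)
    rw [norm_smul]
    exact mul_le_of_le_one_left (norm_nonneg _) (mem_closedBall_zero_iff.mp ht)
  have hlip (x : α) : LipschitzOnWith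
      (Real.nnabs (p.toReal * (‖R x‖ ^ (p.toReal - 1) * ‖g x‖)))
      (fun t : ℝ ↦ ‖f x + t • g x‖ ^ p.toReal) (Metric.closedBall 0 1) := by
    refine .of_dist_le_mul fun s hs t ht ↦ ?_
    have := abs_rpow_norm_sub_rpow_norm_le hr (hline hs x) (hline ht x)
    rw [add_sub_add_left_eq_sub, ← sub_smul, norm_smul] at this
    rw [Real.coe_nnabs, abs_of_nonneg (by positivity), Real.dist_eq, dist_eq_norm]
    linarith
  have hderiv := (hasDerivAt_integral_of_dominated_loc_of_lip (Metric.closedBall_mem_nhds 0 one_pos)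
    (.of_forall fun t ↦ (hint t).aestronglyMeasurable) (hint 0)
    ((integrable_inner_dualityMap hp1 hp hf hg).const_mul p.toReal).aestronglyMeasurable
    (.of_forall hlip) hR (hf0.mono fun x hx ↦ hasDerivAt_rpow_norm_add_smul p.toReal hx (g x))).2
  rwa [integral_const_mul] at hderiv

theorem integral_inner_dualityMap_eq_zero_of_forall_eLpNorm_le (hp1 : 1 ≤ p) (hp : p ≠ ∞)
    (hf : MemLp f p μ) (hg : MemLp g p μ) (hf0 : ∀ᵐ x ∂μ, f x ≠ 0)
    (h : ∀ t : ℝ, eLpNorm f p μ ≤ eLpNorm (f + t • g) p μ) :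
    ∫ x, ⟪dualityMap p.toReal (f x), g x⟫_ℝ ∂μ = 0 := by
  have hp0 : p ≠ 0 := (zero_lt_one.trans_le hp1).ne'
  have hmin : IsLocalMin (fun t : ℝ ↦ ∫ x, ‖f x + t • g x‖ ^ p.toReal ∂μ) 0 :=
    .of_forall fun t ↦ by
      simpa using (eLpNorm_le_eLpNorm_iff_integral_rpow_norm_le hp0 hp hf
        (hf.add (hg.const_smul t))).mp (h t)
  exact (mul_eq_zero.mp (hmin.hasDerivAt_eq_zero
    (hasDerivAt_integral_rpow_norm_add_smul hp1 hp hf hg hf0))).resolve_left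
    (ENNReal.toReal_pos hp0 hp).ne'

theorem eLpNorm_le_eLpNorm_add_of_integral_inner_dualityMap_eq_zero (hp1 : 1 ≤ p) (hp : p ≠ ∞)
    (hf : MemLp f p μ) (hg : MemLp g p μ)
    (h : ∫ x, ⟪dualityMap p.toReal (f x), g x⟫_ℝ ∂μ = 0) :
    eLpNorm f p μ ≤ eLpNorm (f + g) p μ := by
  have hp0 : p ≠ 0 := (zero_lt_one.trans_le hp1).ne'
  have hr : 1 ≤ p.toReal := by simpa using ENNReal.toReal_mono hp hp1
  have hf' := hf.integrable_norm_rpow hp0 hp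
  have hinner := (integrable_inner_dualityMap hp1 hp hf hg).const_mul p.toReal
  rw [eLpNorm_le_eLpNorm_iff_integral_rpow_norm_le hp0 hp hf (hf.add hg)]
  calc ∫ x, ‖f x‖ ^ p.toReal ∂μ
      = ∫ x, (‖f x‖ ^ p.toReal + p.toReal * ⟪dualityMap p.toReal (f x), g x⟫_ℝ) ∂μ := by
        rw [integral_add hf' hinner, integral_const_mul, h, mul_zero, add_zero]
    _ ≤ ∫ x, ‖(f + g) x‖ ^ p.toReal ∂μ := by
        refine integral_mono (hf'.add hinner) ((hf.add hg).integrable_norm_rpow hp0 hp) fun x ↦ ?_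
        simpa using rpow_norm_add_inner_dualityMap_le hr (f x + g x) (f x)

end LpDuality

section ComplexLpDuality

open scoped ComplexConjugate

variable {α : Type*} [MeasurableSpace α] {μ : Measure α} {p : ℝ≥0∞} {f g : α → ℂ}

lemma dualityMap_mul_eq_ite (r : ℝ) (v w : ℂ) :
    dualityMap r v * w = if v = 0 then 0 else ((‖v‖ ^ (r - 2) : ℝ) : ℂ) * v * w := by
  split_ifs with hv
  · rw [hv, dualityMap_zero, zero_mul]
  · rw [dualityMap, Complex.real_smul]

lemma integrable_dualityMap_mul_conj (hp1 : 1 ≤ p) (hp : p ≠ ∞) (hf : MemLp f p μ)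
    (hg : MemLp g p μ) : Integrable (fun x ↦ dualityMap p.toReal (f x) * conj (g x)) μ := by
  refine (integrable_rpow_norm_mul_norm hp1 hp hf hg).mono'
    ((aestronglyMeasurable_dualityMap_comp _ hf.1).mul hg.1.star) (.of_forall fun x ↦ ?_)
  rw [norm_mul, RCLike.norm_conj]
  gcongr
  exact norm_dualityMap_le _ _

lemma integral_inner_dualityMap_smul (hp1 : 1 ≤ p) (hp : p ≠ ∞) (hf : MemLp f p μ)
    (hg : MemLp g p μ) (c : ℂ) :
    ∫ x, ⟪dualityMap p.toReal (f x), c • g x⟫_ℝ ∂μ =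
      ⟪c, ∫ x, dualityMap p.toReal (f x) * conj (g x) ∂μ⟫_ℝ := by
  rw [← integral_inner (integrable_dualityMap_mul_conj hp1 hp hf hg)]
  refine integral_congr_ae (.of_forall fun x ↦ ?_)
  simp only [Complex.inner, smul_eq_mul]
  rw [← Complex.conj_re]
  simp only [map_mul, Complex.conj_conj]
  congr 1
  ring

theorem integral_dualityMap_mul_conj_eq_zero_of_forall_eLpNorm_le (hp1 : 1 ≤ p) (hp : p ≠ ∞)
    (hf : MemLp f p μ) (hg : MemLp g p μ) (hf0 : ∀ᵐ x ∂μ, f x ≠ 0)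
    (h : ∀ c : ℂ, eLpNorm f p μ ≤ eLpNorm (f + c • g) p μ) :
    ∫ x, dualityMap p.toReal (f x) * conj (g x) ∂μ = 0 := by
  refine ext_inner_left ℝ fun c ↦ ?_
  rw [inner_zero_right, ← integral_inner_dualityMap_smul hp1 hp hf hg]
  refine integral_inner_dualityMap_eq_zero_of_forall_eLpNorm_le hp1 hp hf (hg.const_smul c) hf0
    fun t ↦ ?_
  simpa only [← Pi.smul_def, ← smul_assoc] using h (t • c)

end ComplexLpDuality

lemma integral_eq_zero_of_apply_add_left_eq_smul {G E 𝕜 : Type*} [AddGroup G] [MeasurableSpace G]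
    [MeasurableAdd G] {μ : Measure G} [μ.IsAddLeftInvariant] [NormedAddCommGroup E]
    [NormedSpace ℝ E] [NormedDivisionRing 𝕜] [Module 𝕜 E] [NormSMulClass 𝕜 E] [SMulCommClass ℝ 𝕜 E]
    {f : G → E} {x : G} {c : 𝕜} (hc : c ≠ 1) (hf : ∀ z, f (x + z) = c • f z) :
    ∫ z, f z ∂μ = 0 := by
  have hfix : ∫ z, f z ∂μ = c • ∫ z, f z ∂μ := by
    rw [← integral_smul, ← integral_add_left_eq_self f x]
    simp only [hf]
  have : (c - 1) • ∫ z, f z ∂μ = 0 := by rw [sub_smul, one_smul, ← hfix, sub_self]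
  exact (smul_eq_zero.mp this).resolve_left (sub_ne_zero.mpr hc)

section CharacterSums

variable {G : Type*} [AddGroup G] [TopologicalSpace G]

lemma frequently_nhds_zero_addChar_apply_ne [ContinuousAdd G] [PreconnectedSpace G]
    {M : Type*} [Monoid M] {χ ψ : AddChar G M} (h : χ ≠ ψ) :
    ∃ᶠ x in 𝓝 (0 : G), χ x ≠ ψ x := by
  intro hnear
  let H : AddSubgroup G := χ.toAddMonoidHom.eqLocus ψ.toAddMonoidHom
  have hopen : IsOpen (H : Set G) :=
    H.isOpen_of_mem_nhds (hnear.mono fun x hx ↦ not_not.mp hx)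
  have huniv : (H : Set G) = univ :=
    IsClopen.eq_univ ⟨H.isClosed_of_isOpen hopen, hopen⟩ ⟨0, H.zero_mem⟩
  exact h (DFunLike.ext _ _ fun x ↦ huniv.ge (mem_univ x))

variable [IsTopologicalAddGroup G] [MeasurableSpace G] [BorelSpace G] {μ : Measure G}
  [μ.IsAddLeftInvariant] [IsFiniteMeasureOnCompacts μ] [μ.InnerRegularCompactLTTop]

lemma eventually_nhds_zero_measure_inter_preimage_add_left_ne_zero [LocallyCompactSpace G]
    {K : Set G} (hK : IsCompact K) (hK' : IsClosed K) (hμK : μ K ≠ 0) :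
    ∀ᶠ x in 𝓝 (0 : G), μ (K ∩ (x + ·) ⁻¹' K) ≠ 0 := by
  have hneg : Tendsto Neg.neg (𝓝 (0 : G)) (𝓝 0) := continuous_neg.tendsto' 0 0 neg_zero
  filter_upwards [hneg.eventually (eventually_nhds_zero_measure_vadd_sdiff_lt (μ := μ) hK hK' hμK)]
    with x hx hnull
  have htranslate : -x +ᵥ K = (x + ·) ⁻¹' K := by
    ext y; simp [mem_vadd_set_iff_neg_vadd_mem]
  have hle := measure_le_inter_add_sdiff μ ((x + ·) ⁻¹' K) K
  rw [inter_comm, hnull, zero_add, measure_preimage_add, ← htranslate] at hle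
  exact hx.not_ge hle

/-- By induction on the number of characters: if `f` vanished on a set `Z` of positive measure, so
would `f (x + ·) - χ i x * f`, a combination of fewer characters, on `Z ∩ (-x + Z)`, which still has
positive measure for `x` near `0`. -/
theorem ae_sum_addChar_apply_ne_zero [CompactSpace G] [PreconnectedSpace G]
    {𝕜 : Type*} [NormedField 𝕜] {ι : Type*} {χ : ι → AddChar G 𝕜} (hχ : Function.Injective χ)
    (hcont : ∀ i, Continuous (χ i)) (s : Finset ι) (a : ι → 𝕜) (ha : ∃ i ∈ s, a i ≠ 0) :
    ∀ᵐ z ∂μ, ∑ i ∈ s, a i * χ i z ≠ 0 := by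
  induction s using Finset.induction_on generalizing a with
  | empty => simp at ha
  | insert i s his ih =>
    by_cases hs : ∀ j ∈ s, a j = 0
    · refine .of_forall fun z ↦ ?_
      have hai : a i ≠ 0 := fun h ↦ by
        obtain ⟨k, hk, hak⟩ := ha
        exact hak ((Finset.mem_insert.mp hk).elim (· ▸ h) (hs k))
      rw [Finset.sum_insert his, Finset.sum_eq_zero fun j hj ↦ by rw [hs j hj, zero_mul], add_zero]
      exact mul_ne_zero hai ((χ i).val_isUnit z).ne_zero
    push Not at hs
    obtain ⟨j, hj, haj⟩ := hs
    set Z : Set G := {z | ∑ k ∈ insert i s, a k * χ k z = 0}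
    have hZc : IsClosed Z := isClosed_eq (by fun_prop) continuous_const
    suffices μ Z = 0 by simpa [ae_iff] using this
    by_contra hμZ
    obtain ⟨x, hχx, hx⟩ := ((frequently_nhds_zero_addChar_apply_ne
      (hχ.ne (ne_of_mem_of_not_mem hj his))).and_eventually
      (eventually_nhds_zero_measure_inter_preimage_add_left_ne_zero hZc.isCompact hZc hμZ)).exists
    have hsmaller := ih (fun k ↦ a k * (χ k x - χ i x))
      ⟨j, hj, mul_ne_zero haj (sub_ne_zero.mpr hχx)⟩
    refine hx (measure_mono_null (fun z hz ↦ not_not.mpr ?_) (ae_iff.mp hsmaller))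
    have hz1 : ∑ k ∈ insert i s, a k * χ k z = 0 := hz.1
    have hz2 : ∑ k ∈ insert i s, a k * χ k (x + z) = 0 := hz.2
    calc ∑ k ∈ s, a k * (χ k x - χ i x) * χ k z
        = ∑ k ∈ insert i s, a k * (χ k x - χ i x) * χ k z := by simp [Finset.sum_insert his]
      _ = ∑ k ∈ insert i s, a k * χ k (x + z) - χ i x * ∑ k ∈ insert i s, a k * χ k z := by
          rw [Finset.mul_sum, ← Finset.sum_sub_distrib]
          refine Finset.sum_congr rfl fun k _ ↦ ?_
          rw [AddChar.map_add_eq_mul]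
          ring
      _ = 0 := by rw [hz1, hz2, mul_zero, sub_zero]

end CharacterSums

section CharactersOfGroups

lemma exists_addMonoidHom_addCircle_apply_ne_zero {A : Type*} [AddCommGroup A] {a : A}
    (ha : a ≠ 0) : ∃ ψ : A →+ AddCircle (1 : ℝ), ψ a ≠ 0 := by
  obtain ⟨c, hc⟩ := CharacterModule.exists_character_apply_ne_zero_of_ne_zero ha
  have hker : AddSubgroup.zmultiples (1 : ℚ) =
      (AddSubgroup.zmultiples (1 : ℝ)).comap (Rat.castHom ℝ : ℚ →+ ℝ) := by
    ext q
    simp only [AddSubgroup.mem_comap, AddSubgroup.mem_zmultiples_iff]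
    exact exists_congr fun n ↦ by simp [← Rat.cast_inj (α := ℝ)]
  let ι : AddCircle (1 : ℚ) →+ AddCircle (1 : ℝ) :=
    QuotientAddGroup.map _ _ (Rat.castHom ℝ : ℚ →+ ℝ) hker.le
  have hι : Function.Injective ι :=
    (AddMonoidHom.ker_eq_bot_iff ι).mp <| by
      rw [QuotientAddGroup.ker_map, ← hker, QuotientAddGroup.map_mk'_self]
  exact ⟨ι.comp c, fun h ↦ hc (hι (h.trans (map_zero ι).symm))⟩

lemma exists_addMonoidHom_addCircle_of_notMem {A : Type*} [AddCommGroup A] {H : AddSubgroup A}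
    {a : A} (ha : a ∉ H) : ∃ ψ : A →+ AddCircle (1 : ℝ), (∀ h ∈ H, ψ h = 0) ∧ ψ a ≠ 0 := by
  obtain ⟨ψ, hψ⟩ := exists_addMonoidHom_addCircle_apply_ne_zero
    (mt (QuotientAddGroup.eq_zero_iff a).mp ha)
  refine ⟨ψ.comp (QuotientAddGroup.mk' H), fun h hh ↦ ?_, hψ⟩
  simp [(QuotientAddGroup.eq_zero_iff h).mpr hh]

end CharactersOfGroups

section TrigonometricPolynomials

open scoped ComplexConjugate

variable {d : ℕ}

/-- `z ↦ z^α` as a homomorphism from the additively written torus to the multiplicative monoid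
`ℂ`. -/
def torusAddChar (α : Fin d → ℤ) : AddChar (Torus d) ℂ where
  toFun := torusChar α
  map_zero_eq_one' := by simp [torusChar]
  map_add_eq_mul' x y := by
    simp [torusChar, fourier_apply, smul_add, AddCircle.toCircle_add, Finset.prod_mul_distrib]

lemma torusChar_apply_add (α : Fin d → ℤ) (x y : Torus d) :
    torusChar α (x + y) = torusChar α x * torusChar α y :=
  (torusAddChar α).map_add_eq_mul x y

lemma torusChar_add (α β : Fin d → ℤ) (x : Torus d) :
    torusChar (α + β) x = torusChar α x * torusChar β x :=
  UnitAddTorus.mFourier_add (x := x)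

lemma norm_torusChar (α : Fin d → ℤ) (x : Torus d) : ‖torusChar α x‖ = 1 := by
  simp only [torusChar, fourier_apply, norm_prod, Circle.norm_coe, Finset.prod_const_one]

lemma torusChar_ne_zero (α : Fin d → ℤ) (x : Torus d) : torusChar α x ≠ 0 :=
  ((torusAddChar α).val_isUnit x).ne_zero

@[fun_prop]
lemma continuous_torusChar (α : Fin d → ℤ) : Continuous (torusChar α) :=
  (UnitAddTorus.mFourier α).continuous

lemma torusChar_apply_addMonoidHom (ψ : (Fin d → ℤ) →+ AddCircle (1 : ℝ)) (α : Fin d → ℤ) :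
    torusChar α (fun j ↦ ψ (Pi.single j 1)) = AddCircle.toCircle (ψ α) := by
  have hψ : ψ α = ∑ j, α j • ψ (Pi.single j 1) := by
    conv_lhs => rw [← Finset.univ_sum_single α, map_sum]
    refine Finset.sum_congr rfl fun j _ ↦ ?_
    rw [← map_zsmul, ← Pi.single_smul, smul_eq_mul, mul_one]
  calc torusChar α (fun j ↦ ψ (Pi.single j 1))
      = ∏ j, (AddCircle.toCircle (α j • ψ (Pi.single j 1)) : ℂ) := by
        simp only [torusChar, fourier_apply]
    _ = AddCircle.toCircle (∑ j, α j • ψ (Pi.single j 1)) :=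
        (map_prod (Circle.coeHom.comp AddCircle.toCircle_addChar.toMonoidHom)
          (fun j ↦ Multiplicative.ofAdd (α j • ψ (Pi.single j 1))) Finset.univ).symm
    _ = AddCircle.toCircle (ψ α) := by rw [hψ]

lemma exists_torusChar_ne_one_of_notMem {H : AddSubgroup (Fin d → ℤ)} {α : Fin d → ℤ}
    (hα : α ∉ H) : ∃ x, (∀ β ∈ H, torusChar β x = 1) ∧ torusChar α x ≠ 1 := by
  obtain ⟨ψ, hψH, hψα⟩ := exists_addMonoidHom_addCircle_of_notMem hα
  refine ⟨fun j ↦ ψ (Pi.single j 1), fun β hβ ↦ ?_, fun h ↦ hψα ?_⟩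
  · simp [torusChar_apply_addMonoidHom, hψH β hβ]
  · rw [torusChar_apply_addMonoidHom, Circle.coe_eq_one] at h
    exact AddCircle.injective_toCircle one_ne_zero (h.trans AddCircle.toCircle_zero.symm)

lemma torusAddChar_injective : Function.Injective (torusAddChar (d := d)) := by
  intro α β h
  by_contra hne
  obtain ⟨x, -, hx⟩ := exists_torusChar_ne_one_of_notMem
    (mt AddSubgroup.mem_bot.mp (sub_ne_zero.mpr hne))
  have hαβ : torusChar (α - β) x * torusChar β x = torusChar β x := by
    rw [← torusChar_add, sub_add_cancel]
    exact DFunLike.congr_fun h x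
  exact hx ((mul_eq_right₀ (torusChar_ne_zero β x)).mp hαβ)

lemma exists_torusChar_eq_of_notMem_cosetGen {Γ : Set (Fin d → ℤ)} {γ lam : Fin d → ℤ}
    (hγ : γ ∈ Γ) (hlam : lam ∉ cosetGen Γ) :
    ∃ x, (∀ α ∈ Γ, torusChar α x = torusChar γ x) ∧ torusChar lam x ≠ torusChar γ x := by
  have hnot : lam - γ ∉ AddSubgroup.closure ((· - γ) '' Γ) := fun h ↦
    hlam (mem_biUnion hγ ⟨lam - γ, h, add_sub_cancel γ lam⟩)
  obtain ⟨x, hx, hlamx⟩ := exists_torusChar_ne_one_of_notMem hnot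
  have hshift (α : Fin d → ℤ) : torusChar α x = torusChar (α - γ) x * torusChar γ x := by
    rw [← torusChar_add, sub_add_cancel]
  refine ⟨x, fun α hα ↦ ?_, fun h ↦ hlamx ?_⟩
  · rw [hshift, hx _ (AddSubgroup.subset_closure (mem_image_of_mem _ hα)), one_mul]
  · rwa [hshift, mul_eq_right₀ (torusChar_ne_zero γ x)] at h

lemma continuous_trigPoly (F : Finset (Fin d → ℤ)) (a : (Fin d → ℤ) → ℂ) :
    Continuous (trigPoly F a) := by
  unfold trigPoly
  fun_prop

lemma ae_trigPoly_ne_zero (F : Finset (Fin d → ℤ)) (a : (Fin d → ℤ) → ℂ) (ha : ∃ α ∈ F, a α ≠ 0) :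
    ∀ᵐ z : Torus d, trigPoly F a z ≠ 0 :=
  ae_sum_addChar_apply_ne_zero torusAddChar_injective continuous_torusChar F a ha

lemma memLp_trigPoly (F : Finset (Fin d → ℤ)) (a : (Fin d → ℤ) → ℂ) (p : ℝ≥0∞) :
    MemLp (trigPoly F a) p volume :=
  (continuous_trigPoly F a).memLp_of_hasCompactSupport (.of_compactSpace _)

lemma memLp_torusChar (α : Fin d → ℤ) (p : ℝ≥0∞) : MemLp (torusChar α) p volume :=
  (continuous_torusChar α).memLp_of_hasCompactSupport (.of_compactSpace _)

lemma trigPoly_update_of_notMem {F : Finset (Fin d → ℤ)} {lam : Fin d → ℤ} (hlam : lam ∉ F)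
    (a : (Fin d → ℤ) → ℂ) (c : ℂ) : trigPoly F (Function.update a lam c) = trigPoly F a :=
  funext fun _ ↦ Finset.sum_congr rfl fun α hα ↦ by
    rw [Function.update_of_ne (ne_of_mem_of_not_mem hα hlam)]

lemma trigPoly_insert_update {F : Finset (Fin d → ℤ)} {lam : Fin d → ℤ} (hlam : lam ∉ F)
    (a : (Fin d → ℤ) → ℂ) (c : ℂ) :
    trigPoly (insert lam F) (Function.update a lam c) = trigPoly F a + c • torusChar lam := by
  ext x
  rw [trigPoly, Finset.sum_insert hlam, Function.update_self, add_comm, ← trigPoly,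
    trigPoly_update_of_notMem hlam]
  rfl

lemma trigPoly_filter_add_trigPoly_filter_not (F : Finset (Fin d → ℤ)) (Γ : Set (Fin d → ℤ))
    (a : (Fin d → ℤ) → ℂ) :
    trigPoly (F.filter (· ∈ Γ)) a + trigPoly (F.filter (· ∉ Γ)) a = trigPoly F a :=
  funext fun _ ↦ Finset.sum_filter_add_sum_filter_not F (· ∈ Γ) _

lemma trigPoly_add_apply_of_torusChar_eq {F : Finset (Fin d → ℤ)} {x : Torus d} {c : ℂ}
    (hc : ∀ α ∈ F, torusChar α x = c) (a : (Fin d → ℤ) → ℂ) (z : Torus d) :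
    trigPoly F a (x + z) = c • trigPoly F a z := by
  rw [trigPoly, trigPoly, smul_eq_mul, Finset.mul_sum]
  refine Finset.sum_congr rfl fun α hα ↦ ?_
  rw [torusChar_apply_add, hc α hα]
  ring

theorem integral_dualityMap_trigPoly_eq_zero_of_notMem_cosetGen {Γ : Set (Fin d → ℤ)}
    {F : Finset (Fin d → ℤ)} (hF : ↑F ⊆ Γ) (a : (Fin d → ℤ) → ℂ) {lam : Fin d → ℤ}
    (hlam : lam ∉ cosetGen Γ) (r : ℝ) :
    ∫ z, dualityMap r (trigPoly F a z) * conj (torusChar lam z) = 0 := by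
  obtain rfl | ⟨γ, hγ⟩ := F.eq_empty_or_nonempty
  · simp [trigPoly]
  obtain ⟨x, hx, hlamx⟩ := exists_torusChar_eq_of_notMem_cosetGen (hF hγ) hlam
  refine integral_eq_zero_of_apply_add_left_eq_smul (x := x)
    (c := torusChar γ x * conj (torusChar lam x)) (fun h ↦ hlamx ?_) fun z ↦ ?_
  · calc torusChar lam x = torusChar γ x * conj (torusChar lam x) * torusChar lam x := by
          rw [h, one_mul]
      _ = torusChar γ x := by
          rw [mul_assoc, Complex.conj_mul', norm_torusChar, Complex.ofReal_one, one_pow, mul_one]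
  · rw [trigPoly_add_apply_of_torusChar_eq fun α hα ↦ hx α (hF hα),
      dualityMap_smul_of_norm_eq_one r (norm_torusChar γ x), torusChar_apply_add, map_mul,
      smul_eq_mul, smul_eq_mul]
    ring

theorem integral_dualityMap_trigPoly_eq_zero_of_forall_eLpNorm_le {p : ℝ≥0∞} (hp1 : 1 ≤ p)
    (hp : p ≠ ∞) (F : Finset (Fin d → ℤ)) (a : (Fin d → ℤ) → ℂ) (lam : Fin d → ℤ)
    (h : ∀ c : ℂ, eLpNorm (trigPoly F a) p volume ≤
      eLpNorm (trigPoly F a + c • torusChar lam) p volume) :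
    ∫ z, dualityMap p.toReal (trigPoly F a z) * conj (torusChar lam z) = 0 := by
  by_cases ha : ∃ α ∈ F, a α ≠ 0
  · exact integral_dualityMap_mul_conj_eq_zero_of_forall_eLpNorm_le hp1 hp (memLp_trigPoly F a p)
      (memLp_torusChar lam p) (ae_trigPoly_ne_zero F a ha) h
  · push Not at ha
    have hzero (z : Torus d) : trigPoly F a z = 0 :=
      Finset.sum_eq_zero fun α hα ↦ by rw [ha α hα, zero_mul]
    simp [hzero]

theorem eLpNorm_trigPoly_le_eLpNorm_add {p : ℝ≥0∞} (hp1 : 1 ≤ p) (hp : p ≠ ∞)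
    (F G : Finset (Fin d → ℤ)) (a b : (Fin d → ℤ) → ℂ)
    (h : ∀ lam ∈ G, ∫ z, dualityMap p.toReal (trigPoly F a z) * conj (torusChar lam z) = 0) :
    eLpNorm (trigPoly F a) p volume ≤ eLpNorm (trigPoly F a + trigPoly G b) p volume := by
  have hf := memLp_trigPoly F a p
  refine eLpNorm_le_eLpNorm_add_of_integral_inner_dualityMap_eq_zero hp1 hp hf
    (memLp_trigPoly G b p) ?_
  calc ∫ z, ⟪dualityMap p.toReal (trigPoly F a z), trigPoly G b z⟫_ℝ
      = ∫ z, ∑ lam ∈ G, ⟪dualityMap p.toReal (trigPoly F a z), b lam • torusChar lam z⟫_ℝ := by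
        simp only [trigPoly, inner_sum, smul_eq_mul]
    _ = ∑ lam ∈ G, ∫ z, ⟪dualityMap p.toReal (trigPoly F a z), b lam • torusChar lam z⟫_ℝ :=
        integral_finsetSum _ fun lam _ ↦
          integrable_inner_dualityMap hp1 hp hf ((memLp_torusChar lam p).const_smul (b lam))
    _ = 0 := Finset.sum_eq_zero fun lam hlam ↦ by
        rw [integral_inner_dualityMap_smul hp1 hp hf (memLp_torusChar lam p), h lam hlam,
          inner_zero_right]

theorem hp_contractive_iff_orthogonality_general {p : ℝ≥0∞} (hp1 : 1 ≤ p) (hp : p ≠ ∞)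
    {N Γ : Set (Fin d → ℤ)} (hΓ : Γ ⊆ N) :
    (∀ F : Finset (Fin d → ℤ), ↑F ⊆ N → ∀ a : (Fin d → ℤ) → ℂ,
      eLpNorm (trigPoly (F.filter (· ∈ Γ)) a) p volume ≤ eLpNorm (trigPoly F a) p volume) ↔
    ∀ F : Finset (Fin d → ℤ), ↑F ⊆ Γ → ∀ a : (Fin d → ℤ) → ℂ, ∀ lam ∈ (cosetGen Γ ∩ N) \ Γ,
      ∫ z, dualityMap p.toReal (trigPoly F a z) * conj (torusChar lam z) = 0 := by
  constructor
  · rintro hcontr F hF a lam ⟨⟨-, hlamN⟩, hlam⟩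
    refine integral_dualityMap_trigPoly_eq_zero_of_forall_eLpNorm_le hp1 hp F a lam fun c ↦ ?_
    have hlamF : lam ∉ F := fun h ↦ hlam (hF h)
    have hproj : (insert lam F).filter (· ∈ Γ) = F := by
      rw [Finset.filter_insert, if_neg hlam, Finset.filter_true_of_mem fun α hα ↦ hF hα]
    have hext := hcontr (insert lam F)
      (by simpa [insert_subset_iff] using ⟨hlamN, hF.trans hΓ⟩) (Function.update a lam c)
    rwa [hproj, trigPoly_update_of_notMem hlamF, trigPoly_insert_update hlamF] at hext
  · intro horth F hF a
    rw [← trigPoly_filter_add_trigPoly_filter_not F Γ a]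
    refine eLpNorm_trigPoly_le_eLpNorm_add hp1 hp _ _ a a fun lam hlam ↦ ?_
    obtain ⟨hlamF, hlamΓ⟩ := Finset.mem_filter.mp hlam
    have hsub : ↑(F.filter (· ∈ Γ)) ⊆ Γ := fun α hα ↦ (Finset.mem_filter.mp hα).2
    by_cases hcoset : lam ∈ cosetGen Γ
    · exact horth _ hsub a lam ⟨⟨hcoset, hF hlamF⟩, hlamΓ⟩
    · exact integral_dualityMap_trigPoly_eq_zero_of_notMem_cosetGen hsub a hcoset _

end TrigonometricPolynomials

/-- Duality reformulation: `Γ` is a contractive projection set for `H^p(𝕋^d)` iff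
`|f|^{p-2} f ⟂ z^λ` for every analytic polynomial `f` with frequencies in `Γ` and
every `λ ∈ (Λ(Γ) ∩ ℕ₀^d) \ Γ`. -/
theorem hp_contractive_iff_orthogonality (d : ℕ) (hd : 1 ≤ d) (p : ℝ≥0∞)
    (hp1 : 1 ≤ p) (hp2 : p ≠ ∞) (Γ : Set (Fin d → ℤ)) (hne : Γ.Nonempty) (hΓ : Γ ⊆ NN d) :
    IsContractiveHp d p Γ ↔
      ∀ F : Finset (Fin d → ℤ), ↑F ⊆ Γ → ∀ a : (Fin d → ℤ) → ℂ,
        ∀ lam ∈ (cosetGen Γ ∩ NN d) \ Γ,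
          ∫ z : Torus d,
            (if trigPoly F a z = 0 then 0 else
              ((‖trigPoly F a z‖ ^ (p.toReal - 2) : ℝ) : ℂ) * trigPoly F a z *
                (starRingEnd ℂ) (torusChar lam z)) = 0 := by
  simpa only [IsContractiveHp, ← dualityMap_mul_eq_ite] using
    hp_contractive_iff_orthogonality_general hp1 hp2 hΓ

end
end

section
/- Let d ≥ 1 be an integer and let T be a nonempty subset of ℕ_0^d with dim(T) = 1. Then the 1-completion of T satisfies E_1^∞(T) = Λ(T) ∩ ℕ_0^d. -/
open MeasureTheory
open scoped Classical ENNReal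

noncomputable section

/-!
The extension `E_n(Γ)` with `n ≥ 1` contains every point `a - b + c` of `ℕ₀^d` with `a`, `b`, `c` in
`Γ`, so the completion of `T` is closed under these operations. If `dim T ≤ 1`, then `T` lies on a
lattice line `k ↦ p + k (q - p)`, which meets `ℕ₀^d` in an interval `I` of integers `k`. This leaves
a statement about a subset `S` of `I` closed under `a - b + c` within `I`. Let `g` be the least
distance between two distinct points of `S`. Moving from a point of `S` by multiples of `g` stays in
`S` as long as it stays in `I`, hence, by division with remainder, `g` divides all differences of
points of `S`, and `S` contains every point of `I` in the coset it generates.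
-/

/-- `S` is a subset of `N` containing the fourth vertex `a - b + c` of every (possibly degenerate)
parallelogram with three vertices in `S` and the fourth in `N`. The completion of `T` has this
property for `N = ℕ₀^d`. -/
structure IsParallelogramClosed {G : Type*} [AddCommGroup G] (S N : Set G) : Prop where
  subset : S ⊆ N
  sub_add_mem : ∀ ⦃a⦄, a ∈ S → ∀ ⦃b⦄, b ∈ S → ∀ ⦃c⦄, c ∈ S → a - b + c ∈ N → a - b + c ∈ S

namespace IsParallelogramClosed

theorem preimage {G H : Type*} [AddCommGroup G] [AddCommGroup H] {S N : Set H}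
    (hS : IsParallelogramClosed S N) (f : G →ᵃ[ℤ] H) :
    IsParallelogramClosed (f ⁻¹' S) (f ⁻¹' N) where
  subset := Set.preimage_mono hS.subset
  sub_add_mem a ha b hb c hc h := by
    have map_sub_add : f (a - b + c) = f a - f b + f c := by
      rw [← vadd_eq_add, f.map_vadd, ← vsub_eq_sub, f.linearMap_vsub, vsub_eq_sub, vadd_eq_add]
    rw [Set.mem_preimage, map_sub_add] at h ⊢
    exact hS.sub_add_mem ha hb hc h

section OrdConnected

variable {G : Type*} [AddCommGroup G] [LinearOrder G] [IsOrderedAddMonoid G] {S I : Set G}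
  {a b c : G}

theorem nsmul_sub_add_mem (hS : IsParallelogramClosed S I) (hI : I.OrdConnected)
    (ha : a ∈ S) (hb : b ∈ S) (hc : c ∈ S) (k : ℕ) (h : k • (a - b) + c ∈ I) :
    k • (a - b) + c ∈ S := by
  induction k with
  | zero => simpa using hc
  | succ k ih =>
    have between : k • (a - b) + c ∈ Set.uIcc c ((k + 1) • (a - b) + c) := by
      rw [Set.mem_uIcc, succ_nsmul]
      rcases le_total 0 (a - b) with hab | hab
      · exact .inl ⟨le_add_of_nonneg_left (nsmul_nonneg hab k), by gcongr; simpa using hab⟩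
      · exact .inr ⟨by gcongr; simpa using hab, add_le_of_nonpos_left (nsmul_nonpos hab k)⟩
    have prev_mem : k • (a - b) + c ∈ S := ih (hI.uIcc_subset (hS.subset hc) h between)
    rw [succ_nsmul', add_assoc] at h ⊢
    exact hS.sub_add_mem ha hb prev_mem h

theorem zsmul_sub_add_mem (hS : IsParallelogramClosed S I) (hI : I.OrdConnected)
    (ha : a ∈ S) (hb : b ∈ S) (hc : c ∈ S) (k : ℤ) (h : k • (a - b) + c ∈ I) :
    k • (a - b) + c ∈ S := by
  obtain ⟨n, rfl | rfl⟩ := k.eq_nat_or_neg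
  · rw [natCast_zsmul] at h ⊢
    exact hS.nsmul_sub_add_mem hI ha hb hc n h
  · rw [neg_smul, ← smul_neg, neg_sub, natCast_zsmul] at h ⊢
    exact hS.nsmul_sub_add_mem hI hb ha hc n h

end OrdConnected

section Int

variable {S I : Set ℤ}

theorem sub_dvd_sub_of_natAbs_le (hS : IsParallelogramClosed S I) (hI : I.OrdConnected)
    {a b : ℤ} (ha : a ∈ S) (hb : b ∈ S) (hab : a ≠ b)
    (hmin : ∀ x ∈ S, ∀ y ∈ S, x ≠ y → (a - b).natAbs ≤ (x - y).natAbs)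
    {x y : ℤ} (hx : x ∈ S) (hy : y ∈ S) : a - b ∣ x - y := by
  obtain rfl | hxy := eq_or_ne x y
  · simp
  wlog hyx : y < x generalizing x y
  · exact dvd_sub_comm.1 (this hy hx hxy.symm (hxy.lt_of_le (not_lt.1 hyx)))
  set r := (x - y) % (a - b)
  have rem_nonneg : 0 ≤ r := Int.emod_nonneg _ (sub_ne_zero.2 hab)
  have rem_lt : r < (a - b).natAbs := Int.emod_lt _ (sub_ne_zero.2 hab)
  have rem_le : r ≤ x - y := by
    have gap_le := hmin x hx y hy hxy
    omega
  have sub_rem_eq : x - r = ((x - y) / (a - b)) • (a - b) + y := by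
    rw [smul_eq_mul]
    linarith [Int.emod_add_ediv_mul (x - y) (a - b)]
  have sub_rem_mem : x - r ∈ S := by
    have sub_rem_mem_I : x - r ∈ I :=
      hI.out (hS.subset hy) (hS.subset hx) ⟨by linarith, by linarith⟩
    rw [sub_rem_eq] at sub_rem_mem_I ⊢
    exact hS.zsmul_sub_add_mem hI ha hb hy _ sub_rem_mem_I
  have rem_eq_zero : r = 0 := by
    by_contra rem_ne_zero
    have gap_le := hmin x hx (x - r) sub_rem_mem (by omega)
    omega
  exact Int.dvd_of_emod_eq_zero rem_eq_zero

theorem exists_sub_dvd_sub (hS : IsParallelogramClosed S I) (hI : I.OrdConnected)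
    (hne : S.Nonempty) : ∃ a ∈ S, ∃ b ∈ S, ∀ x ∈ S, ∀ y ∈ S, a - b ∣ x - y := by
  obtain hsub | hnt := S.subsingleton_or_nontrivial
  · obtain ⟨s, hs⟩ := hne
    exact ⟨s, hs, s, hs, fun x hx y hy => by simp [hsub hx hy]⟩
  · obtain ⟨a₀, ha₀, b₀, hb₀, hab₀⟩ := hnt
    obtain ⟨⟨a, b⟩, ⟨ha, hb, hab⟩, hmin⟩ := exists_minimalFor_of_wellFoundedLT
      (fun p : ℤ × ℤ => p.1 ∈ S ∧ p.2 ∈ S ∧ p.1 ≠ p.2) (fun p => (p.1 - p.2).natAbs)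
      ⟨(a₀, b₀), ha₀, hb₀, hab₀⟩
    refine ⟨a, ha, b, hb, fun x hx y hy => hS.sub_dvd_sub_of_natAbs_le hI ha hb hab ?_ hx hy⟩
    intro x hx y hy hxy
    exact (le_total _ _).elim id (hmin (j := (x, y)) ⟨hx, hy, hxy⟩)

theorem affineSpan_int_inter_subset (hS : IsParallelogramClosed S I) (hI : I.OrdConnected) :
    (affineSpan ℤ S : Set ℤ) ∩ I ⊆ S := by
  rintro x ⟨hx, hxI⟩
  obtain ⟨s, hs⟩ : S.Nonempty := (affineSpan_nonempty ℤ).1 ⟨x, hx⟩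
  obtain ⟨a, ha, b, hb, hdvd⟩ := hS.exists_sub_dvd_sub hI ⟨s, hs⟩
  have vectorSpan_le : vectorSpan ℤ S ≤ Submodule.span ℤ {a - b} := by
    rw [vectorSpan_def, Submodule.span_le]
    rintro _ ⟨x, hx, y, hy, rfl⟩
    exact Ideal.mem_span_singleton.2 (hdvd x hx y hy)
  obtain ⟨k, hk⟩ := Submodule.mem_span_singleton.1 <| vectorSpan_le <|
    vsub_mem_vectorSpan_of_mem_affineSpan_of_mem_affineSpan hx (mem_affineSpan ℤ hs)
  obtain rfl : k • (a - b) + s = x := by rw [hk, vsub_eq_sub, sub_add_cancel]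
  exact hS.zsmul_sub_add_mem hI ha hb hs k hxI

end Int

theorem affineSpan_inter_subset_of_subset_range {G : Type*} [AddCommGroup G] {S N T : Set G}
    (hS : IsParallelogramClosed S N) (hTS : T ⊆ S) (f : ℤ →ᵃ[ℤ] G) (hT : T ⊆ Set.range f)
    (hN : (f ⁻¹' N).OrdConnected) : (affineSpan ℤ T : Set G) ∩ N ⊆ S := by
  rintro x ⟨hx, hxN⟩
  have span_le : affineSpan ℤ T ≤ (affineSpan ℤ (f ⁻¹' S)).map f := by
    rw [AffineSubspace.map_span, Set.image_preimage_eq_inter_range]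
    exact affineSpan_mono ℤ (Set.subset_inter hTS hT)
  obtain ⟨k, hk, rfl⟩ := span_le hx
  exact (hS.preimage f).affineSpan_int_inter_subset hN ⟨hk, hxN⟩

end IsParallelogramClosed

theorem exists_subset_range_lineMap {G : Type*} [AddCommGroup G] [Module.Free ℤ G]
    [Module.Finite ℤ G] {T : Set G} {p : G} (hp : p ∈ T)
    (hrank : Module.finrank ℤ (vectorSpan ℤ T) ≤ 1) :
    ∃ q : G, T ⊆ Set.range (AffineMap.lineMap p q : ℤ →ᵃ[ℤ] G) := by
  obtain ⟨v, hv⟩ := ((vectorSpan ℤ T).finrank_le_one_iff_isPrincipal.1 hrank).principal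
  refine ⟨v + p, fun t ht => ?_⟩
  obtain ⟨k, hk⟩ := Submodule.mem_span_singleton.1 (hv ▸ vsub_mem_vectorSpan ℤ ht hp)
  exact ⟨k, by simp [AffineMap.lineMap_apply, hk]⟩

section MultiIndex

variable {d n k : ℕ} {Γ T : Set (Fin d → ℤ)} {a b c : Fin d → ℤ}

theorem ordConnected_lineMap_preimage_NN (p q : Fin d → ℤ) :
    ((AffineMap.lineMap p q : ℤ →ᵃ[ℤ] Fin d → ℤ) ⁻¹' NN d).OrdConnected := by
  refine ⟨fun x hx y hy z ⟨hxz, hzy⟩ j => ?_⟩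
  have hxj := hx j
  have hyj := hy j
  simp only [AffineMap.lineMap_apply_module', Pi.add_apply, Pi.smul_apply, Pi.sub_apply,
    smul_eq_mul] at hxj hyj ⊢
  -- Along the line each coordinate is monotone or antitone.
  rcases le_total 0 (q j - p j) with h | h <;> nlinarith

theorem cosetGen_eq_affineSpan (Γ : Set (Fin d → ℤ)) : cosetGen Γ = affineSpan ℤ Γ := by
  ext x
  simp only [cosetGen, Set.mem_iUnion, Set.mem_image, SetLike.mem_coe, mem_affineSpan_iff_exists,
    ← exists_prop (a := _ ∈ Γ)]
  refine exists_congr fun γ => exists_congr fun hγ => exists_congr fun v => and_congr ?_ ?_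
  · rw [vectorSpan_eq_span_vsub_set_right ℤ hγ, ← Submodule.mem_toAddSubgroup,
      Submodule.span_int_eq_addSubgroupClosure]
    rfl
  · rw [vadd_eq_add, add_comm, eq_comm]

theorem HasDim.finrank_vectorSpan (hT : HasDim T k) (hne : T.Nonempty) :
    Module.finrank ℤ (vectorSpan ℤ T) = k := by
  obtain ⟨γ, hγ⟩ := hne
  rw [vectorSpan_eq_span_vsub_set_right ℤ hγ]
  exact hT γ hγ

theorem Eext_subset_NN (n : ℕ) (Γ : Set (Fin d → ℤ)) : Eext n Γ ⊆ NN d :=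
  fun _ hx => hx.1.2

theorem Eext_subset_affineSpan (n : ℕ) (Γ : Set (Fin d → ℤ)) : Eext n Γ ⊆ affineSpan ℤ Γ :=
  fun _ hx => cosetGen_eq_affineSpan Γ ▸ hx.1.1

theorem mem_Eext_of_mem (n : ℕ) (ha : a ∈ Γ) (h : a ∈ NN d) : a ∈ Eext n Γ :=
  ⟨⟨cosetGen_eq_affineSpan Γ ▸ mem_affineSpan ℤ ha, h⟩, a, ha, 0, by simp⟩

theorem subset_Eext (n : ℕ) (hΓ : Γ ⊆ NN d) : Γ ⊆ Eext n Γ :=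
  fun _ hγ => mem_Eext_of_mem n hγ (hΓ hγ)

theorem sub_add_mem_cosetGen (ha : a ∈ Γ) (hb : b ∈ Γ) (hc : c ∈ Γ) :
    a - b + c ∈ cosetGen Γ := by
  rw [cosetGen_eq_affineSpan]
  exact vadd_mem_affineSpan_of_mem_affineSpan_of_mem_vectorSpan (mem_affineSpan ℤ hc)
    (vsub_mem_vectorSpan ℤ ha hb)

theorem sub_add_self_mem_Eext (hn : 1 ≤ n) (ha : a ∈ Γ) (hb : b ∈ Γ) (hba : b ≠ a)
    (h : a - b + a ∈ NN d) : a - b + a ∈ Eext n Γ := by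
  refine ⟨⟨sub_add_mem_cosetGen ha hb ha, h⟩, a, ha, Finsupp.single b (-1), ?_⟩
  rw [Finsupp.support_single _ (by decide)]
  simp [hb, hba, hn, sub_add_eq_add_sub, add_sub_assoc]

theorem sub_add_mem_Eext (hn : 1 ≤ n) (ha : a ∈ Γ) (hb : b ∈ Γ) (hc : c ∈ Γ)
    (h : a - b + c ∈ NN d) : a - b + c ∈ Eext n Γ := by
  -- The support of `m` has to avoid the base point `c`, so coincidences among `a`, `b`, `c` need
  -- other representations.
  obtain rfl | hab := eq_or_ne a b
  · rw [sub_self, zero_add] at h ⊢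
    exact mem_Eext_of_mem n hc h
  obtain rfl | hbc := eq_or_ne b c
  · rw [sub_add_cancel] at h ⊢
    exact mem_Eext_of_mem n ha h
  obtain rfl | hac := eq_or_ne a c
  · exact sub_add_self_mem_Eext hn ha hb hbc h
  refine ⟨⟨sub_add_mem_cosetGen ha hb hc, h⟩, c, hc,
    Finsupp.single a 1 + Finsupp.single b (-1), ?_⟩
  rw [Finsupp.support_single_add_single hab one_ne_zero (by decide)]
  have sum_eq : a - b + c = c + ((a - c) - (b - c)) := by abel
  simp [Set.insert_subset_iff, Finset.sum_pair hab, ha, hb, hab, hab.symm, hac, hbc, hn, sum_eq,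
    ← sub_eq_add_neg]

theorem EextIter_subset_NN (n k : ℕ) (T : Set (Fin d → ℤ)) : EextIter n k T ⊆ NN d := by
  cases k <;> exact Eext_subset_NN n _

theorem EextIter_subset_affineSpan (n k : ℕ) (T : Set (Fin d → ℤ)) :
    EextIter n k T ⊆ affineSpan ℤ T := by
  induction k with
  | zero => exact Eext_subset_affineSpan n T
  | succ k ih => exact (Eext_subset_affineSpan n _).trans (affineSpan_le.2 ih)

theorem EextIter_monotone (n : ℕ) (T : Set (Fin d → ℤ)) : Monotone fun k => EextIter n k T :=
  monotone_nat_of_le_succ fun k => subset_Eext n (EextIter_subset_NN n k T)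

theorem subset_EextInf (n : ℕ) (hT : T ⊆ NN d) : T ⊆ EextInf n T :=
  (subset_Eext n hT).trans (Set.subset_iUnion (fun k => EextIter n k T) 0)

theorem EextInf_subset (n : ℕ) (T : Set (Fin d → ℤ)) : EextInf n T ⊆ cosetGen T ∩ NN d := by
  rw [cosetGen_eq_affineSpan]
  exact Set.iUnion_subset fun k =>
    Set.subset_inter (EextIter_subset_affineSpan n k T) (EextIter_subset_NN n k T)

theorem isParallelogramClosed_EextInf (hn : 1 ≤ n) (T : Set (Fin d → ℤ)) :
    IsParallelogramClosed (EextInf n T) (NN d) where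
  subset := (EextInf_subset n T).trans Set.inter_subset_right
  sub_add_mem a ha b hb c hc h := by
    obtain ⟨i, hi⟩ := Set.mem_iUnion.1 ha
    obtain ⟨j, hj⟩ := Set.mem_iUnion.1 hb
    obtain ⟨l, hl⟩ := Set.mem_iUnion.1 hc
    let m := max (max i j) l
    have mem_of_le {i x} (him : i ≤ m) (hx : x ∈ EextIter n i T) : x ∈ EextIter n m T :=
      EextIter_monotone n T him hx
    exact Set.mem_iUnion.2 ⟨m + 1, sub_add_mem_Eext hn (mem_of_le (by omega) hi)
      (mem_of_le (by omega) hj) (mem_of_le (by omega) hl) h⟩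

end MultiIndex

theorem one_completion_of_dim_one_general {d n k : ℕ} (hn : 1 ≤ n) (hk : k ≤ 1)
    {T : Set (Fin d → ℤ)} (hT : T ⊆ NN d) (hdim : HasDim T k) :
    EextInf n T = cosetGen T ∩ NN d := by
  refine (EextInf_subset n T).antisymm ?_
  obtain rfl | ⟨p, hp⟩ := T.eq_empty_or_nonempty
  · simp [cosetGen]
  obtain ⟨q, hpq⟩ := exists_subset_range_lineMap hp ((hdim.finrank_vectorSpan ⟨p, hp⟩).trans_le hk)
  rw [cosetGen_eq_affineSpan]
  exact (isParallelogramClosed_EextInf hn T).affineSpan_inter_subset_of_subset_range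
    (subset_EextInf n hT) _ hpq (ordConnected_lineMap_preimage_NN p q)

/-- If `dim T = 1`, then the `1`-completion of `T` is `Λ(T) ∩ ℕ₀^d`. -/
theorem one_completion_of_dim_one (d : ℕ) (hd : 1 ≤ d) (T : Set (Fin d → ℤ))
    (hne : T.Nonempty) (hT : T ⊆ NN d) (hdim : HasDim T 1) :
    EextInf 1 T = cosetGen T ∩ NN d :=
  one_completion_of_dim_one_general le_rfl le_rfl hT hdim

end
end
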